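/- Let d > 2 be an integer and c₀ ∈ (0,1]. There exist constants c, C > 0 depending only on (d, c₀) such that for every admissible kernel J on ℤ^d with constant c₀, every G ∈ 𝒢 with (J,G) satisfying Assumption G, every δ ∈ (0,1/2], every β ≤ min{1−δ, β(δ)}, and every x ∈ ℤ^d: G_β(x) ≤ δ_0(x) + (C/σ_J^d)·(σ_J/(σ_J∨|x|))^{d−2}·exp(−c·|x|/ξ(β)), and F_β(x) ≤ (C/σ_J^d)·(σ_J/(σ_J∨|x|))^{d−2}·exp(−c·|x|/ξ(β)). -/

import Mathlib

open scoped ENNReal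

noncomputable section

namespace Blackbox

/-- Supremum norm of a lattice point. -/
def supNorm {d : ℕ} (x : Fin d → ℤ) : ℝ :=
  ((Finset.univ.sup fun i => (x i).natAbs : ℕ) : ℝ)

/-- Squared Euclidean norm of a lattice point. -/
def sqNorm {d : ℕ} (x : Fin d → ℤ) : ℝ :=
  ∑ i, ((x i : ℝ)) ^ 2

/-- Invariance under coordinate permutations and sign flips of individual coordinates. -/
def IsSymmFun {d : ℕ} {α : Type*} (f : (Fin d → ℤ) → α) : Prop :=
  ∀ (π : Equiv.Perm (Fin d)) (e : Fin d → Bool) (x : Fin d → ℤ),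
    f (fun i => (if e i then -1 else 1) * x (π i)) = f x

/-- First coordinate (dot product with `e₁`). -/
def e1 {d : ℕ} {α : Type*} [Zero α] (y : Fin d → α) : α :=
  if h : 0 < d then y ⟨0, h⟩ else 0

/-- An admissible kernel on `ℤ^d` with constant `c₀`. -/
structure AdmissibleKernel (d : ℕ) (c₀ : ℝ) where
  J : (Fin d → ℤ) → ℝ
  nonneg : ∀ x, 0 ≤ J x
  zero_at_zero : J 0 = 0
  summable : Summable J
  norm_one : ∑' x, J x = 1
  symm : IsSymmFun J
  R : ℝ
  R_ge_one : 1 ≤ R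
  range_le : ∀ x, 0 < J x → supNorm x ≤ R
  range_attained : ∃ x, 0 < J x ∧ supNorm x = R
  summable_sq : Summable fun x => sqNorm x * J x
  sigma_lower : c₀ * R ≤ Real.sqrt (∑' x, sqNorm x * J x)
  J_upper : ∀ x, J x ≤ c₀⁻¹ / R ^ d

/-- `σ_J`, the square root of the variance of the kernel. -/
def AdmissibleKernel.sigma {d : ℕ} {c₀ : ℝ} (K : AdmissibleKernel d c₀) : ℝ :=
  Real.sqrt (∑' x, sqNorm x * K.J x)

/-- A family `G ∈ 𝒢` together with an admissible kernel `J` such that `(J,G)` satisfies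
Assumption G (with error-term family `H`). -/
structure Model (d : ℕ) (c₀ : ℝ) where
  K : AdmissibleKernel d c₀
  G : ℝ → (Fin d → ℤ) → ℝ≥0∞
  βc : ℝ≥0∞
  βc_pos : 0 < βc
  init : ∀ x, G 0 x = if x = 0 then 1 else 0
  G' : ℝ → (Fin d → ℤ) → ℝ
  mono : ∀ (x : Fin d → ℤ) ⦃β₁ β₂ : ℝ⦄, 0 ≤ β₁ → β₁ ≤ β₂ →
    ENNReal.ofReal β₂ ≤ βc → G β₁ x ≤ G β₂ x
  deriv : ∀ (x : Fin d → ℤ) ⦃β : ℝ⦄, 0 ≤ β → ENNReal.ofReal β < βc →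
    HasDerivWithinAt (fun t => (G t x).toReal) (G' β x) (Set.Ici 0) β
  symm : ∀ β, IsSymmFun (G β)
  expDecay : ∀ ⦃β : ℝ⦄, 0 ≤ β → ENNReal.ofReal β < βc →
    ∃ C > (0:ℝ), ∃ c > (0:ℝ), ∀ x, G β x ≤ ENNReal.ofReal (C * Real.exp (-c * supNorm x))
  limit : βc ≠ ⊤ → ∀ x, G βc.toReal x = ⨆ β ∈ Set.Ico (0 : ℝ) βc.toReal, G β x
  I1 : ∀ ⦃β' β : ℝ⦄, 0 ≤ β' → β' ≤ β → ENNReal.ofReal β < βc →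
    ∀ x, G β x ≤ G β' x + ENNReal.ofReal (β - β') *
      ∑' p : (Fin d → ℤ) × (Fin d → ℤ),
        G β' p.1 * ENNReal.ofReal (K.J p.2) * G β (x - p.1 - p.2)
  H : ℝ → (Fin d → ℤ) → ℝ
  H_nonneg : ∀ β x, 0 ≤ H β x
  H_zero : ∀ x, H 0 x = 0
  H_symm : ∀ β x, H β (-x) = H β x
  H_cont : ∀ x, ContinuousOn (fun β => H β x)
    {β : ℝ | 0 ≤ β ∧ ENNReal.ofReal β < βc}
  H_expDecay : ∀ ⦃β : ℝ⦄, 0 ≤ β → ENNReal.ofReal β < βc →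
    ∃ C > (0:ℝ), ∃ c > (0:ℝ), ∀ x, H β x ≤ C * Real.exp (-c * supNorm x)
  I2 : ∀ ⦃β : ℝ⦄, 0 ≤ β → ENNReal.ofReal β < βc → ∀ x,
    (∑' p : (Fin d → ℤ) × (Fin d → ℤ),
      (G β p.1).toReal * (K.J p.2 - H β p.2) * (G β (x - p.1 - p.2)).toReal)
      ≤ G' β x

namespace Model

variable {d : ℕ} {c₀ : ℝ}

def sigma (M : Model d c₀) : ℝ := M.K.sigma

/-- `F_β = J * G_β`. -/
def F (M : Model d c₀) (β : ℝ) (x : Fin d → ℤ) : ℝ≥0∞ :=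
  ∑' y, ENNReal.ofReal (M.K.J y) * M.G β (x - y)

/-- The susceptibility `χ(β)`. -/
def chi (M : Model d c₀) (β : ℝ) : ℝ≥0∞ := ∑' x, M.G β x

/-- `ξ(β)²`. -/
def xiSq (M : Model d c₀) (β : ℝ) : ℝ≥0∞ :=
  (∑' x, ENNReal.ofReal (sqNorm x) * M.F β x) / M.chi β

/-- The correlation length of order two, `ξ(β)`. -/
def xi (M : Model d c₀) (β : ℝ) : ℝ := Real.sqrt (M.xiSq β).toReal

/-- The error term `E(β)`. -/
def E (M : Model d c₀) (β : ℝ) : ℝ≥0∞ :=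
  ⨆ t ∈ Set.Icc (0 : ℝ) β,
    (ENNReal.ofReal (∑' x, M.H t x) +
      ENNReal.ofReal (∑' x, sqNorm x * M.H t x) / M.xiSq t)

/-- `β(δ)`. -/
def betaOf (M : Model d c₀) (δ : ℝ) : ℝ :=
  sSup {β : ℝ | 0 ≤ β ∧ ENNReal.ofReal β < M.βc ∧ M.E β < ENNReal.ofReal δ}

/-- One-step distribution of the effective random walk at parameter `β`. -/
def effStep (M : Model d c₀) (β : ℝ) (y : Fin d → ℤ) : ℝ≥0∞ :=
  M.F β y / M.chi β

/-- `k`-step distribution of the effective random walk at parameter `β`. -/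
def effIter (M : Model d c₀) (β : ℝ) : ℕ → (Fin d → ℤ) → ℝ≥0∞
  | 0 => fun x => if x = 0 then 1 else 0
  | n + 1 => fun x => ∑' y, M.effStep β y * M.effIter β n (x - y)

/-- Moment generating function `M_β(s)` of the first coordinate of one step of the
effective random walk. -/
def Mgf (M : Model d c₀) (β s : ℝ) : ℝ≥0∞ :=
  ∑' y : Fin d → ℤ, M.effStep β y * ENNReal.ofReal (Real.exp (s / M.xi β * ((e1 y : ℤ) : ℝ)))

end Model

end Blackbox
open Blackbox

namespace Aux

lemma tsum_pi_prod {α : Type*} (f : α → ℝ≥0∞) (n : ℕ) :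
    ∑' ys : Fin n → α, ∏ j, f (ys j) = (∑' a, f a) ^ n := by
  induction n with
  | zero => simp
  | succ n ih =>
    rw [← (Fin.consEquiv (fun _ => α)).tsum_eq]
    simp only [Fin.consEquiv_apply, Fin.prod_univ_succ, Fin.cons_zero, Fin.cons_succ]
    rw [ENNReal.tsum_prod (f := fun a (b : Fin n → α) => f a * ∏ j, f (b j))]
    simp_rw [ENNReal.tsum_mul_left, ih, ENNReal.tsum_mul_right]
    rw [pow_succ, mul_comm]

variable {d : ℕ}

def cv (w f : (Fin d → ℤ) → ℝ≥0∞) (x : Fin d → ℤ) : ℝ≥0∞ := ∑' y, w y * f (x - y)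

def dl (x : Fin d → ℤ) : ℝ≥0∞ := if x = 0 then 1 else 0

def Ex (w : (Fin d → ℤ) → ℝ≥0∞) (n : ℕ) (φ : (Fin n → Fin d → ℤ) → ℝ≥0∞) : ℝ≥0∞ :=
  ∑' ys : Fin n → Fin d → ℤ, (∏ j, w (ys j)) * φ ys

lemma Ex_mono {w : (Fin d → ℤ) → ℝ≥0∞} {n : ℕ} {φ ψ : (Fin n → Fin d → ℤ) → ℝ≥0∞}
    (h : ∀ y, φ y ≤ ψ y) : Ex w n φ ≤ Ex w n ψ :=
  ENNReal.tsum_le_tsum fun y => mul_le_mul_right (h y) _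

lemma Ex_prod (w f : (Fin d → ℤ) → ℝ≥0∞) (n : ℕ) :
    Ex w n (fun ys => ∏ j, f (ys j)) = (∑' y, w y * f y) ^ n := by
  unfold Ex
  simp_rw [← Finset.prod_mul_distrib]
  exact tsum_pi_prod (fun y => w y * f y) n

lemma Ex_const (w : (Fin d → ℤ) → ℝ≥0∞) (hw : ∑' y, w y = 1) (n : ℕ) (c : ℝ≥0∞) :
    Ex w n (fun _ => c) = c := by
  unfold Ex
  rw [ENNReal.tsum_mul_right, tsum_pi_prod, hw]; simp

lemma Ex_add (w : (Fin d → ℤ) → ℝ≥0∞) (n : ℕ) (φ ψ : (Fin n → Fin d → ℤ) → ℝ≥0∞) :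
    Ex w n (fun y => φ y + ψ y) = Ex w n φ + Ex w n ψ := by
  unfold Ex
  rw [← ENNReal.tsum_add]; simp_rw [mul_add]

lemma Ex_mul (w : (Fin d → ℤ) → ℝ≥0∞) (n : ℕ) (c : ℝ≥0∞) (φ : (Fin n → Fin d → ℤ) → ℝ≥0∞) :
    Ex w n (fun y => c * φ y) = c * Ex w n φ := by
  unfold Ex
  rw [← ENNReal.tsum_mul_left]; congr 1; ext y; ring

lemma Ex_sum (w : (Fin d → ℤ) → ℝ≥0∞) (n : ℕ) {ι : Type*} (s : Finset ι)
    (φ : ι → (Fin n → Fin d → ℤ) → ℝ≥0∞) :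
    Ex w n (fun y => ∑ i ∈ s, φ i y) = ∑ i ∈ s, Ex w n (φ i) := by
  unfold Ex
  simp_rw [Finset.mul_sum]
  exact Summable.tsum_finsetSum (fun _ _ => ENNReal.summable)

lemma cv_iter (w f : (Fin d → ℤ) → ℝ≥0∞) (n : ℕ) (x : Fin d → ℤ) :
    (cv w)^[n] f x = Ex w n (fun ys => f (x - ∑ j, ys j)) := by
  induction n generalizing x with
  | zero => simp [Ex]
  | succ n ih =>
    rw [Function.iterate_succ_apply']
    change ∑' y, w y * (cv w)^[n] f (x - y) = _
    simp_rw [ih]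
    unfold Ex
    rw [← (Fin.consEquiv (fun _ => (Fin d → ℤ))).tsum_eq]
    simp only [Fin.consEquiv_apply, Fin.prod_univ_succ, Fin.sum_univ_succ, Fin.cons_zero,
      Fin.cons_succ]
    rw [ENNReal.tsum_prod (f := fun a (b : Fin n → Fin d → ℤ) =>
      (w a * ∏ j, w (b j)) * f (x - (a + ∑ j, b j)))]
    simp_rw [← ENNReal.tsum_mul_left, mul_assoc, sub_sub]

lemma cv_mono (w : (Fin d → ℤ) → ℝ≥0∞) {f g : (Fin d → ℤ) → ℝ≥0∞} (h : ∀ x, f x ≤ g x)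
    (n : ℕ) (x) : (cv w)^[n] f x ≤ (cv w)^[n] g x := by
  rw [cv_iter, cv_iter]; exact Ex_mono fun y => h _

lemma cv_const (w : (Fin d → ℤ) → ℝ≥0∞) (hw : ∑' y, w y = 1) {f : (Fin d → ℤ) → ℝ≥0∞} {C : ℝ≥0∞}
    (h : ∀ x, f x ≤ C) (n : ℕ) (x) : (cv w)^[n] f x ≤ C := by
  rw [cv_iter]; exact (Ex_mono (fun y => h _)).trans (Ex_const w hw n C).le

lemma dom (w : (Fin d → ℤ) → ℝ≥0∞) (hw : ∑' y, w y = 1) (g : (Fin d → ℤ) → ℝ≥0∞) (C t : ℝ≥0∞)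
    (hC : C ≠ ⊤) (ht : t < 1) (hg : ∀ x, g x ≤ C) (h : ∀ x, g x ≤ dl x + t * cv w g x) (x) :
    g x ≤ ∑' n, t ^ n * (cv w)^[n] dl x := by
  have key : ∀ N : ℕ, g x ≤ ∑ n ∈ Finset.range N, t ^ n * (cv w)^[n] dl x
      + t ^ N * (cv w)^[N] g x := by
    intro N
    induction N with
    | zero => simp
    | succ N ih =>
      refine ih.trans ?_
      rw [Finset.sum_range_succ, add_assoc]
      gcongr
      have := cv_mono w h N x
      have e : (cv w)^[N] (fun x => dl x + t * cv w g x) x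
          = (cv w)^[N] dl x + t * (cv w)^[N+1] g x := by
        rw [Function.iterate_succ_apply, cv_iter, cv_iter, cv_iter, Ex_add, Ex_mul]
      rw [e] at this
      calc _ ≤ t ^ N * ((cv w)^[N] dl x + t * (cv w)^[N+1] g x) := by gcongr
        _ = _ := by ring
  have key2 : ∀ N : ℕ, g x ≤ ∑' n, t ^ n * (cv w)^[n] dl x + t ^ N * C := fun N =>
    (key N).trans (add_le_add (ENNReal.sum_le_tsum _) (mul_le_mul_right (cv_const w hw hg N x) _))
  have lim : Filter.Tendsto (fun N : ℕ => ∑' n, t ^ n * (cv w)^[n] dl x + t ^ N * C) Filter.atTop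
      (nhds (∑' n, t ^ n * (cv w)^[n] dl x + 0 * C)) := by
    apply Filter.Tendsto.const_add
    exact ENNReal.Tendsto.mul_const (ENNReal.tendsto_pow_atTop_nhds_zero_of_lt_one ht) (Or.inr hC)
  have := ge_of_tendsto' lim key2
  simpa using this

lemma cv_pair (w f : (Fin d → ℤ) → ℝ≥0∞) (n : ℕ) (x : Fin d → ℤ) :
    (cv w)^[n] f x = ∑' y, (cv w)^[n] dl (x - y) * f y := by
  induction n generalizing x with
  | zero =>
    simp only [Function.iterate_zero, id]
    rw [tsum_eq_single x]
    · simp [dl]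
    · intro y hy
      have : x - y ≠ 0 := sub_ne_zero.mpr hy.symm
      simp [dl, this]
  | succ n ih =>
    rw [Function.iterate_succ_apply', Function.iterate_succ_apply']
    change ∑' z, w z * (cv w)^[n] f (x - z) = ∑' y, (∑' z, w z * (cv w)^[n] dl (x - y - z)) * f y
    simp_rw [ih, ← ENNReal.tsum_mul_left, ← ENNReal.tsum_mul_right]
    rw [ENNReal.tsum_comm]
    congr 1; ext y; congr 1; ext z
    rw [mul_assoc, sub_right_comm]

lemma cv_pair0 (w f : (Fin d → ℤ) → ℝ≥0∞) (hf : ∀ x, f (-x) = f x) (n : ℕ) :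
    ∑' y, (cv w)^[n] dl y * f y = (cv w)^[n] f 0 := by
  rw [cv_pair, ← (Equiv.neg _).tsum_eq]
  simp [hf]

lemma cv_mass (w : (Fin d → ℤ) → ℝ≥0∞) (hw : ∑' y, w y = 1) (n : ℕ) :
    ∑' y, (cv w)^[n] dl y = 1 := by
  have := cv_pair0 w (fun _ => 1) (fun _ => rfl) n
  rw [cv_iter, Ex_const w hw] at this
  simpa using this

end Aux

namespace Aux

def sg (b : Bool) : ℤ := if b then -1 else 1

lemma cB_bound (n : ℕ) : n.centralBinom ^ 2 * (2 * n + 1) ≤ 16 ^ n := by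
  induction n with
  | zero => simp
  | succ n ih =>
    have h := Nat.succ_mul_centralBinom_succ n
    have h2 : ((n + 1) * (n+1).centralBinom) ^ 2 = (2 * (2 * n + 1) * n.centralBinom) ^ 2 := by
      rw [h]
    have h3 : (n+1)^2 * ((n+1).centralBinom ^ 2 * (2 * (n + 1) + 1)) ≤ (n+1)^2 * 16 ^ (n+1) := by
      calc (n+1)^2 * ((n+1).centralBinom ^ 2 * (2 * (n + 1) + 1))
          = ((n + 1) * (n+1).centralBinom) ^ 2 * (2 * n + 3) := by ring
        _ = 4 * ((2 * n + 1) * (2 * n + 3)) * (n.centralBinom ^ 2 * (2 * n + 1)) := by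
            rw [h2]; ring
        _ ≤ 4 * (4 * (n+1)^2) * 16 ^ n := by
            have : (2 * n + 1) * (2 * n + 3) ≤ 4 * (n+1)^2 := by nlinarith
            exact Nat.mul_le_mul (Nat.mul_le_mul_left 4 this) ih
        _ = _ := by ring
    exact Nat.le_of_mul_le_mul_left h3 (by positivity)

lemma mid_bound (N : ℕ) : (N.choose (N / 2)) ^ 2 * (N + 1) ≤ 4 ^ N := by
  rcases Nat.even_or_odd' N with ⟨n, rfl | rfl⟩
  · have := cB_bound n
    rw [Nat.centralBinom] at this
    rw [Nat.mul_div_cancel_left _ (by norm_num), pow_mul]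
    simpa using this
  · have h := cB_bound (n+1)
    have e : (n+1).centralBinom = 2 * (2 * n + 1).choose n := by
      rw [Nat.centralBinom, show 2 * (n+1) = (2 * n + 1) + 1 by ring, Nat.choose_succ_succ,
        Nat.choose_symm_half]; ring
    have e2 : (2 * n + 1) / 2 = n := by omega
    rw [e] at h
    have e3 : (4:ℕ) ^ (2 * n + 1) = 4 * 16 ^ n := by rw [pow_succ, pow_mul]; norm_num; ring
    rw [e2, e3]
    rw [mul_pow, pow_succ 16 n] at h
    nlinarith [Nat.zero_le (((2 * n + 1).choose n)^2)]

lemma LO_a {ι : Type*} [Fintype ι] [DecidableEq ι] (a : ι → ℝ) (A : ℝ) (hA : 0 < A)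
    (ha : ∀ j, A ≤ |a j|) (y : ℝ) :
    (Finset.univ.filter fun ε : ι → Bool =>
      y ≤ ∑ j, (sg (ε j) : ℝ) * a j ∧ ∑ j, (sg (ε j) : ℝ) * a j < y + 2 * A).card
      ≤ (Fintype.card ι).choose (Fintype.card ι / 2) := by
  classical
  set g : Finset ι → ℝ := fun T => ∑ j, (if j ∈ T then |a j| else -|a j|) with hg
  set 𝒜 : Finset (Finset ι) := Finset.univ.filter fun T => y ≤ g T ∧ g T < y + 2 * A with h𝒜
  have anti : IsAntichain (· ⊆ ·) (𝒜 : Set (Finset ι)) := by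
    intro S hS T hT hne hST
    simp only [h𝒜, Finset.coe_filter, Finset.mem_univ, true_and, Set.mem_ofPred_eq] at hS hT
    have hss : S ⊂ T := lt_of_le_of_ne hST hne
    obtain ⟨j, hjT, hjS⟩ := Finset.exists_of_ssubset hss
    have hd : g T - g S ≥ 2 * A := by
      rw [hg]
      simp only
      rw [← Finset.sum_sub_distrib]
      have h0 : ∀ i ∈ Finset.univ, 0 ≤ (if i ∈ T then |a i| else -|a i|) -
          (if i ∈ S then |a i| else -|a i|) := by
        intro i _
        have := abs_nonneg (a i)
        by_cases h1 : i ∈ S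
        · simp [h1, hST h1]
        · by_cases h2 : i ∈ T <;> simp [h1, h2]
      have h1 := Finset.single_le_sum h0 (Finset.mem_univ j)
      simp only [hjT, hjS, if_true, if_false] at h1
      have := ha j
      linarith
    linarith [hS.1, hT.2]
  refine le_trans ?_ anti.sperner
  let T : (ι → Bool) → Finset ι := fun ε => Finset.univ.filter fun j => (ε j = true ↔ a j < 0)
  have hT : ∀ ε, g (T ε) = ∑ j, (sg (ε j) : ℝ) * a j := by
    intro ε
    apply Finset.sum_congr rfl
    intro j _
    simp only [T, Finset.mem_filter, Finset.mem_univ, true_and, sg]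
    by_cases h1 : a j < 0
    · cases h : ε j <;> simp [h1, abs_of_neg]
    · have := abs_of_nonneg (not_lt.mp h1)
      cases h : ε j <;> simp [h1, this]
  apply Finset.card_le_card_of_injOn T
  · intro ε hε
    simp only [Finset.coe_filter, Finset.mem_univ, true_and, Set.mem_ofPred_eq, h𝒜] at hε ⊢
    rw [hT]; exact hε
  · intro ε _ ε' _ h
    ext j
    have : j ∈ T ε ↔ j ∈ T ε' := by rw [h]
    simp only [T, Finset.mem_filter, Finset.mem_univ, true_and] at this
    by_cases h1 : a j < 0 <;> cases h : ε j <;> cases h' : ε' j <;> simp_all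

lemma LO_c {n : ℕ} (a : Fin n → ℝ) (A : ℝ) (hA : 0 < A) (y : ℝ) :
    ((Finset.univ.filter fun ε : Fin n → Bool =>
      y ≤ ∑ j, (sg (ε j) : ℝ) * a j ∧ ∑ j, (sg (ε j) : ℝ) * a j < y + 2 * A).card : ℝ)
      ≤ 2 ^ n / √((Finset.univ.filter fun j => A ≤ |a j|).card + 1) := by
  classical
  set p : Fin n → Prop := fun j => A ≤ |a j| with hp
  set N := (Finset.univ.filter fun j => A ≤ |a j|).card with hN
  have cN : Fintype.card {j // p j} = N := by rw [Fintype.card_subtype]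
  have cN' : Fintype.card {j // ¬ p j} = n - N := by
    rw [Fintype.card_subtype_compl, cN, Fintype.card_fin]
  have hNn : N ≤ n := by
    have := Finset.card_le_univ (Finset.univ.filter fun j => A ≤ |a j|)
    simpa using this
  have hsplit : ∀ ε : Fin n → Bool, ∑ j, (sg (ε j) : ℝ) * a j =
      ∑ j : {j // p j}, (sg (ε j) : ℝ) * a j + ∑ j : {j // ¬ p j}, (sg (ε j) : ℝ) * a j := by
    intro ε
    exact (Fintype.sum_subtype_add_sum_subtype p (fun j => (sg (ε j) : ℝ) * a j)).symm
  have h1 : (Finset.univ.filter fun ε : Fin n → Bool =>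
      y ≤ ∑ j, (sg (ε j) : ℝ) * a j ∧ ∑ j, (sg (ε j) : ℝ) * a j < y + 2 * A).card
      ≤ 2 ^ (n - N) * N.choose (N / 2) := by
    rw [Finset.card_filter]
    rw [← (Equiv.piEquivPiSubtypeProd p (fun _ => Bool)).symm.sum_comp, Fintype.sum_prod_type_right]
    have hb : ∀ ε2 : {j // ¬ p j} → Bool, ∑ ε1 : {j // p j} → Bool,
      (if y ≤ ∑ j, (sg ((Equiv.piEquivPiSubtypeProd p (fun _ => Bool)).symm (ε1, ε2) j) : ℝ) * a j ∧
          ∑ j, (sg ((Equiv.piEquivPiSubtypeProd p (fun _ => Bool)).symm (ε1, ε2) j) : ℝ) * a j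
            < y + 2 * A then 1 else 0) ≤ N.choose (N / 2) := by
      intro ε2
      have := LO_a (fun j : {j // p j} => a j) A hA (fun j => j.2)
        (y - ∑ j : {j // ¬ p j}, (sg (ε2 j) : ℝ) * a j)
      rw [cN, Finset.card_filter] at this
      refine le_trans (le_of_eq ?_) this
      apply Finset.sum_congr rfl
      intro ε1 _
      rw [hsplit]
      have e1 : ∀ j : {j // p j},
        (Equiv.piEquivPiSubtypeProd p (fun _ => Bool)).symm (ε1, ε2) j = ε1 j := by
        intro j; simp [Equiv.piEquivPiSubtypeProd, j.2]
      have e2 : ∀ j : {j // ¬ p j},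
        (Equiv.piEquivPiSubtypeProd p (fun _ => Bool)).symm (ε1, ε2) j = ε2 j := by
        intro j; simp [Equiv.piEquivPiSubtypeProd, j.2]
      simp_rw [e1, e2]
      congr 1
      apply propext
      constructor <;> rintro ⟨u, v⟩ <;> constructor <;> linarith
    refine (Finset.sum_le_sum fun ε2 _ => hb ε2).trans ?_
    rw [Finset.sum_const, Finset.card_univ, Fintype.card_fun, cN']
    simp
  rw [le_div_iff₀ (by positivity)]
  have h2 := mid_bound N
  have h2' : ((N.choose (N/2) : ℝ)) ^ 2 * (N + 1) ≤ (2 ^ N) ^ 2 := by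
    rw [← pow_mul, mul_comm N 2, pow_mul]; norm_num; exact_mod_cast h2
  have h3 : (N.choose (N/2) : ℝ) * √((N:ℝ) + 1) ≤ 2 ^ N := by
    apply le_of_sq_le_sq _ (by positivity)
    rw [mul_pow, Real.sq_sqrt (by positivity)]
    exact h2'
  have h1' : ((Finset.univ.filter fun ε : Fin n → Bool =>
      y ≤ ∑ j, (sg (ε j) : ℝ) * a j ∧ ∑ j, (sg (ε j) : ℝ) * a j < y + 2 * A).card : ℝ)
      ≤ 2 ^ (n - N) * N.choose (N / 2) := by exact_mod_cast h1
  calc _ ≤ 2 ^ (n - N) * (N.choose (N / 2) : ℝ) * √((N:ℝ) + 1) := by gcongr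
    _ = 2 ^ (n - N) * ((N.choose (N / 2) : ℝ) * √((N:ℝ) + 1)) := by ring
    _ ≤ 2 ^ (n - N) * 2 ^ N := by gcongr
    _ = 2 ^ n := by rw [← pow_add, Nat.sub_add_cancel hNn]

lemma LO_d {n : ℕ} (a : Fin n → ℝ) (A : ℝ) (hA : 0 < A) (x R : ℝ) (k : ℕ) (hk : R < k * A) :
    ((Finset.univ.filter fun ε : Fin n → Bool =>
      |x - ∑ j, (sg (ε j) : ℝ) * a j| ≤ R).card : ℝ)
      ≤ k * (2 ^ n / √((Finset.univ.filter fun j => A ≤ |a j|).card + 1)) := by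
  classical
  have hsub : (Finset.univ.filter fun ε : Fin n → Bool =>
      |x - ∑ j, (sg (ε j) : ℝ) * a j| ≤ R) ⊆ (Finset.range k).biUnion fun l =>
      (Finset.univ.filter fun ε : Fin n → Bool =>
      x - R + 2 * A * l ≤ ∑ j, (sg (ε j) : ℝ) * a j ∧
        ∑ j, (sg (ε j) : ℝ) * a j < x - R + 2 * A * l + 2 * A) := by
    intro ε hε
    simp only [Finset.mem_filter, Finset.mem_univ, true_and, Finset.mem_biUnion,
      Finset.mem_range] at hε ⊢
    set s := ∑ j, (sg (ε j) : ℝ) * a j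
    rw [abs_le] at hε
    have hz : 0 ≤ (s - (x - R)) / (2 * A) := div_nonneg (by linarith) (by linarith)
    have f1 := Nat.floor_le hz
    have f2 := Nat.lt_floor_add_one ((s - (x - R)) / (2 * A))
    refine ⟨⌊(s - (x - R)) / (2 * A)⌋₊, ?_, ?_, ?_⟩
    · rw [Nat.floor_lt hz, div_lt_iff₀ (by linarith)]; nlinarith
    · rw [le_div_iff₀ (by linarith)] at f1; linarith
    · rw [div_lt_iff₀ (by linarith)] at f2; linarith
  have h1 := (Finset.card_le_card hsub).trans Finset.card_biUnion_le
  have h1' : ((Finset.univ.filter fun ε : Fin n → Bool =>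
      |x - ∑ j, (sg (ε j) : ℝ) * a j| ≤ R).card : ℝ) ≤ ∑ l ∈ Finset.range k,
      ((Finset.univ.filter fun ε : Fin n → Bool =>
      x - R + 2 * A * l ≤ ∑ j, (sg (ε j) : ℝ) * a j ∧
        ∑ j, (sg (ε j) : ℝ) * a j < x - R + 2 * A * l + 2 * A).card : ℝ) := by exact_mod_cast h1
  refine h1'.trans ((Finset.sum_le_sum fun l _ => LO_c a A hA _).trans ?_)
  simp

end Aux

namespace Aux
variable {d : ℕ} {c₀ : ℝ}

def wK (K : AdmissibleKernel d c₀) (x : Fin d → ℤ) : ℝ≥0∞ := ENNReal.ofReal (K.J x)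

lemma wK_sum (K : AdmissibleKernel d c₀) : ∑' y, wK K y = 1 := by
  unfold wK
  rw [← ENNReal.ofReal_tsum_of_nonneg K.nonneg K.summable, K.norm_one, ENNReal.ofReal_one]

lemma symm_sg {α : Type*} {f : (Fin d → ℤ) → α} (hf : IsSymmFun f) (e : Fin d → Bool) (x : Fin d → ℤ) :
    f (fun i => sg (e i) * x i) = f x := by
  have := hf 1 e x
  simpa [sg] using this

lemma symm_neg {α : Type*} {f : (Fin d → ℤ) → α} (hf : IsSymmFun f) (x : Fin d → ℤ) :
    f (-x) = f x := by
  have := symm_sg hf (fun _ => true) x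
  rw [← this]; congr 1; ext i; simp [sg]

lemma symm_perm {α : Type*} {f : (Fin d → ℤ) → α} (hf : IsSymmFun f) (π : Equiv.Perm (Fin d))
    (x : Fin d → ℤ) : f (fun i => x (π i)) = f x := by
  have := hf π (fun _ => false) x
  simpa using this

lemma wK_symm (K : AdmissibleKernel d c₀) : IsSymmFun (wK K) := by
  intro π e x
  unfold wK; rw [K.symm π e x]

lemma abs_le_supNorm (x : Fin d → ℤ) (i : Fin d) : |(x i : ℝ)| ≤ supNorm x := by
  unfold supNorm
  have h : (x i).natAbs ≤ Finset.univ.sup fun i => (x i).natAbs :=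
    Finset.le_sup (f := fun i => (x i).natAbs) (Finset.mem_univ i)
  calc |(x i : ℝ)| = (((x i).natAbs : ℕ) : ℝ) := by
        rw [Nat.cast_natAbs]; simp
    _ ≤ _ := by exact_mod_cast h

lemma supNorm_nonneg (x : Fin d → ℤ) : 0 ≤ supNorm x := by unfold supNorm; positivity

lemma exists_supNorm (hd : 0 < d) (x : Fin d → ℤ) : ∃ i, |(x i : ℝ)| = supNorm x := by
  haveI : Nonempty (Fin d) := ⟨⟨0, hd⟩⟩
  obtain ⟨i, -, hi⟩ := Finset.exists_mem_eq_sup Finset.univ Finset.univ_nonempty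
    (fun i => (x i).natAbs)
  refine ⟨i, ?_⟩
  unfold supNorm
  rw [hi, Nat.cast_natAbs]; simp

lemma wK_supp (K : AdmissibleKernel d c₀) (x : Fin d → ℤ) (h : K.R < supNorm x) : wK K x = 0 := by
  unfold wK
  rw [ENNReal.ofReal_eq_zero]
  by_contra h'
  exact absurd (K.range_le x (not_le.mp h')) (not_le.mpr h)

lemma sigma_sq (K : AdmissibleKernel d c₀) : K.sigma ^ 2 = ∑' x, sqNorm x * K.J x := by
  unfold AdmissibleKernel.sigma
  refine Real.sq_sqrt (tsum_nonneg fun x => mul_nonneg ?_ (K.nonneg x))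
  exact Finset.sum_nonneg fun i _ => sq_nonneg _

lemma sqNorm_nonneg (x : Fin d → ℤ) : 0 ≤ sqNorm x := Finset.sum_nonneg fun i _ => sq_nonneg _

lemma wK_sq (K : AdmissibleKernel d c₀) :
    ∑' y, wK K y * ENNReal.ofReal (sqNorm y) = ENNReal.ofReal (K.sigma ^ 2) := by
  rw [sigma_sq, ENNReal.ofReal_tsum_of_nonneg (fun x => mul_nonneg (sqNorm_nonneg x) (K.nonneg x))
    K.summable_sq]
  congr 1; ext y
  rw [ENNReal.ofReal_mul (sqNorm_nonneg y), mul_comm]; rfl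

lemma wK_coord (K : AdmissibleKernel d c₀) (i : Fin d) :
    d * ∑' y, wK K y * ENNReal.ofReal ((y i : ℝ) ^ 2) = ENNReal.ofReal (K.sigma ^ 2) := by
  rw [← wK_sq]
  unfold sqNorm
  simp_rw [ENNReal.ofReal_sum_of_nonneg (fun i _ => sq_nonneg _), Finset.mul_sum]
  rw [Summable.tsum_finsetSum (fun _ _ => ENNReal.summable)]
  have : ∀ k : Fin d, ∑' y : Fin d → ℤ, wK K y * ENNReal.ofReal ((y k : ℝ) ^ 2) =
      ∑' y, wK K y * ENNReal.ofReal ((y i : ℝ) ^ 2) := by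
    intro k
    rw [← (Equiv.arrowCongr (Equiv.swap i k) (Equiv.refl ℤ)).tsum_eq]
    congr 1; ext y
    have e : (Equiv.arrowCongr (Equiv.swap i k) (Equiv.refl ℤ)) y = fun l => y (Equiv.swap i k l) := by
      ext l; simp [Equiv.arrowCongr]
    rw [e, symm_perm (wK_symm K)]
    simp
  simp_rw [this]
  simp

lemma wK_P (hc : 0 < c₀) (K : AdmissibleKernel d c₀) (i : Fin d) :
    ENNReal.ofReal (c₀ ^ 2 / (2 * d)) ≤ 
      ∑' y, wK K y * (if c₀ * K.R / √(2 * d) ≤ |(y i : ℝ)| then 1 else 0) := by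
  have hd : (0:ℝ) < d := by have := i.pos; exact_mod_cast this
  have hR : 0 < K.R := lt_of_lt_of_le one_pos K.R_ge_one
  set P := ∑' y, wK K y * (if c₀ * K.R / √(2 * d) ≤ |(y i : ℝ)| then 1 else 0) with hP
  have h1 : ∑' y, wK K y * ENNReal.ofReal ((y i : ℝ) ^ 2) ≤
      ENNReal.ofReal (c₀ ^ 2 * K.R ^ 2 / (2 * d)) + ENNReal.ofReal (K.R ^ 2) * P := by
    have : ENNReal.ofReal (c₀ ^ 2 * K.R ^ 2 / (2 * d)) + ENNReal.ofReal (K.R ^ 2) * P =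
      ∑' y, wK K y * (ENNReal.ofReal (c₀ ^ 2 * K.R ^ 2 / (2 * d)) + ENNReal.ofReal (K.R ^ 2) *
        (if c₀ * K.R / √(2 * d) ≤ |(y i : ℝ)| then 1 else 0)) := by
      simp_rw [mul_add]
      rw [ENNReal.tsum_add, ENNReal.tsum_mul_right, wK_sum, one_mul, hP, ← ENNReal.tsum_mul_left]
      congr 2; ext y; ring
    rw [this]
    apply ENNReal.tsum_le_tsum
    intro y
    by_cases hy : K.R < supNorm y
    · rw [wK_supp K y hy]; simp
    · apply mul_le_mul_right
      have hy2 := (abs_le_supNorm y i).trans (not_lt.mp hy)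
      split_ifs with h
      · rw [mul_one]
        refine le_trans ?_ le_add_self
        apply ENNReal.ofReal_le_ofReal
        rw [← sq_abs]; gcongr
      · refine le_trans ?_ le_self_add
        apply ENNReal.ofReal_le_ofReal
        rw [← sq_abs]
        have : c₀ ^ 2 * K.R ^ 2 / (2 * d) = (c₀ * K.R / √(2 * d)) ^ 2 := by
          rw [div_pow, Real.sq_sqrt (by positivity)]; ring
        rw [this]
        have := not_le.mp h
        gcongr
  have h2 := wK_coord K i
  have hs : (c₀ * K.R) ^ 2 ≤ K.sigma ^ 2 := by
    have := K.sigma_lower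
    have h0 : 0 ≤ c₀ * K.R := by positivity
    unfold AdmissibleKernel.sigma
    gcongr
  have hPt : P ≠ ⊤ := by
    have : P ≤ 1 := by
      rw [← wK_sum K]; apply ENNReal.tsum_le_tsum; intro y; split_ifs <;> simp
    exact ne_top_of_le_ne_top ENNReal.one_ne_top this
  have h3 : ENNReal.ofReal ((c₀ * K.R) ^ 2) ≤ ENNReal.ofReal (d * (c₀ ^ 2 * K.R ^ 2 / (2 * d) +
      K.R ^ 2 * P.toReal)) := by
    refine (ENNReal.ofReal_le_ofReal hs).trans ?_
    rw [← h2, ENNReal.ofReal_mul (by positivity), ENNReal.ofReal_natCast,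
      ENNReal.ofReal_add (by positivity) (by positivity), ENNReal.ofReal_mul (by positivity),
      ENNReal.ofReal_toReal hPt]
    gcongr
  rw [ENNReal.ofReal_le_ofReal_iff (by positivity)] at h3
  apply ENNReal.ofReal_le_of_le_toReal
  have h4 : c₀ ^ 2 * K.R ^ 2 ≤ c₀ ^ 2 * K.R ^ 2 / 2 + d * K.R ^ 2 * P.toReal := by
    calc c₀ ^ 2 * K.R ^ 2 = (c₀ * K.R) ^ 2 := by ring
      _ ≤ _ := h3
      _ = _ := by field_simp
  rw [div_le_iff₀ (by positivity)]
  have h5 : K.R ^ 2 * c₀ ^ 2 ≤ K.R ^ 2 * (P.toReal * (2 * d)) := by nlinarith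
  exact le_of_mul_le_mul_left h5 (by positivity)

lemma wK_half (hc : 0 < c₀) (hc1 : c₀ ≤ 1) (K : AdmissibleKernel d c₀) (i : Fin d) :
    ∑' y, wK K y * (if c₀ * K.R / √(2 * d) ≤ |(y i : ℝ)| then 2⁻¹ else 1) ≤
      ENNReal.ofReal (Real.exp (- (c₀ ^ 2 / (2 * d)) / 2)) := by
  have hd : (0:ℝ) < d := by have := i.pos; exact_mod_cast this
  set P := ∑' y, wK K y * (if c₀ * K.R / √(2 * d) ≤ |(y i : ℝ)| then 1 else 0) with hP
  set Q := ∑' y, wK K y * (if c₀ * K.R / √(2 * d) ≤ |(y i : ℝ)| then 2⁻¹ else 1) with hQ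
  have h1 : Q + 2⁻¹ * P = 1 := by
    rw [← wK_sum K, hP, hQ, ← ENNReal.tsum_mul_left, ← ENNReal.tsum_add]
    congr 1; ext y
    split_ifs
    · rw [mul_one, mul_comm, ← add_mul, ENNReal.inv_two_add_inv_two, one_mul]
    · simp
  have h2 := wK_P hc K i
  have hh : ENNReal.ofReal (1/2) = 2⁻¹ := by
    rw [one_div, ENNReal.ofReal_inv_of_pos (by norm_num)]; norm_num
  have h3 : Q + ENNReal.ofReal (c₀ ^ 2 / (2 * d) / 2) ≤ 1 := by
    rw [← h1, div_eq_mul_one_div _ (2:ℝ), mul_comm _ (1/2 : ℝ), ENNReal.ofReal_mul (by norm_num), hh]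
    gcongr
  have h4 : Q ≤ 1 - ENNReal.ofReal (c₀ ^ 2 / (2 * d) / 2) :=
    ENNReal.le_sub_of_add_le_right ENNReal.ofReal_ne_top h3
  refine h4.trans ?_
  rw [← ENNReal.ofReal_one, ← ENNReal.ofReal_sub _ (by positivity)]
  apply ENNReal.ofReal_le_ofReal
  have := Real.add_one_le_exp (- (c₀ ^ 2 / (2 * d)) / 2)
  linarith

end Aux

namespace Aux
variable {d : ℕ} {c₀ : ℝ}

lemma sg_sq (b : Bool) (z : ℤ) : sg b * (sg b * z) = z := by cases b <;> simp [sg]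

def flipE {n : ℕ} (e : Fin d → Fin n → Bool) : (Fin n → Fin d → ℤ) ≃ (Fin n → Fin d → ℤ) :=
  Function.Involutive.toPerm (fun ys j i => sg (e i j) * ys j i) (by
    intro ys; ext j i; exact sg_sq _ _)

lemma flipE_apply {n : ℕ} (e : Fin d → Fin n → Bool) (ys) : 
    flipE e ys = fun j i => sg (e i j) * ys j i := rfl

lemma Ex_flip {w : (Fin d → ℤ) → ℝ≥0∞} (hw : IsSymmFun w) {n : ℕ} (e : Fin d → Fin n → Bool)
    (φ : (Fin n → Fin d → ℤ) → ℝ≥0∞) :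
    Ex w n φ = Ex w n (fun ys => φ (fun j i => sg (e i j) * ys j i)) := by
  unfold Ex
  rw [← (flipE e).tsum_eq]
  congr 1; ext ys
  rw [flipE_apply]
  congr 1
  apply Finset.prod_congr rfl
  intro j _
  exact symm_sg hw (fun i => e i j) (ys j)

lemma prod_le_sum_pow {k : ℕ} (hk : 0 < k) (f : Fin k → ℝ≥0∞) : ∏ i, f i ≤ ∑ i, f i ^ k := by
  have : Nonempty (Fin k) := ⟨⟨0, hk⟩⟩
  obtain ⟨i, -, hi⟩ := Finset.exists_max_image Finset.univ f Finset.univ_nonempty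
  calc ∏ j, f j ≤ ∏ _j : Fin k, f i := Finset.prod_le_prod' fun j _ => hi j (Finset.mem_univ j)
    _ = f i ^ k := by simp
    _ ≤ _ := Finset.single_le_sum (f := fun i => f i ^ k) (fun _ _ => zero_le) (Finset.mem_univ i)

lemma exp_bound (hd : 0 < d) (y : ℝ) (hy : 0 < y) : Real.exp (-y) ≤ (√d / √y) ^ d := by
  have hd' : (0:ℝ) < d := by exact_mod_cast hd
  have h1 : √(y / d) ≤ Real.exp (y / d) := by
    have := Real.add_one_le_exp (y / d)
    have h0 : 0 ≤ y / d := by positivity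
    refine le_trans ?_ this
    rw [Real.sqrt_le_left (by positivity)]
    nlinarith
  have h2 : (√(y / d)) ^ d ≤ Real.exp y := by
    calc _ ≤ (Real.exp (y / d)) ^ d := by gcongr
      _ = Real.exp y := by rw [← Real.exp_nat_mul]; congr 1; field_simp
  rw [Real.exp_neg]
  have : (√d / √y) ^ d = ((√(y / d)) ^ d)⁻¹ := by
    rw [Real.sqrt_div hy.le, ← inv_pow, inv_div]
  rw [this]
  gcongr

def Cc (d : ℕ) (c₀ : ℝ) : ℝ :=
  (⌊√(2 * d) / c₀⌋₊ + 1 : ℕ) ^ d * (d * ((1 + √d ^ d) / √(c₀ ^ 2 / (2 * d) / 4) ^ d))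

lemma Cc_pos (hd : 0 < d) (hc : 0 < c₀) : 0 < Cc d c₀ := by
  unfold Cc; have : (0:ℝ) < d := by exact_mod_cast hd
  positivity

lemma conc (hd : 0 < d) (hc : 0 < c₀) (hc1 : c₀ ≤ 1) (K : AdmissibleKernel d c₀) (n : ℕ)
    (hn : 0 < n) (x : Fin d → ℤ) :
    Ex (wK K) n (fun ys => ∏ i, if |(x i : ℝ) - ∑ j, (ys j i : ℝ)| ≤ K.R then (1:ℝ≥0∞) else 0) ≤
      ENNReal.ofReal (Cc d c₀ / √n ^ d) := by
  classical
  have hd' : (0:ℝ) < d := by exact_mod_cast hd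
  have hn' : (0:ℝ) < n := by exact_mod_cast hn
  have hR : 0 < K.R := lt_of_lt_of_le one_pos K.R_ge_one
  set A := c₀ * K.R / √(2 * d) with hA
  have hA0 : 0 < A := by positivity
  set k : ℕ := ⌊√(2 * d) / c₀⌋₊ + 1 with hk
  have hkA : K.R < k * A := by
    have := Nat.lt_floor_add_one (√(2 * d) / c₀)
    have e : K.R = (√(2 * d) / c₀) * A := by rw [hA]; field_simp
    calc K.R = (√(2 * d) / c₀) * A := e
      _ < k * A := by rw [hk]; push_cast; gcongr
  set p := c₀ ^ 2 / (2 * d) with hp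
  have hp0 : 0 < p := by positivity
  set N : (Fin n → Fin d → ℤ) → Fin d → ℕ := fun ys i =>
    (Finset.univ.filter fun j => A ≤ |(ys j i : ℝ)|).card with hN
  set φ : (Fin n → Fin d → ℤ) → ℝ≥0∞ := fun ys =>
    ∏ i, if |(x i : ℝ) - ∑ j, (ys j i : ℝ)| ≤ K.R then (1:ℝ≥0∞) else 0 with hφ
  -- averaging over signs
  have h1 : ((2:ℝ≥0∞) ^ n) ^ d * Ex (wK K) n φ =
      Ex (wK K) n (fun ys => ∑ e : Fin d → Fin n → Bool, φ (fun j i => sg (e i j) * ys j i)) := by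
    rw [Ex_sum]
    simp_rw [← Ex_flip (wK_symm K)]
    simp
  have h2 : ∀ ys : Fin n → Fin d → ℤ,
      ∑ e : Fin d → Fin n → Bool, φ (fun j i => sg (e i j) * ys j i) ≤
      ((2:ℝ≥0∞) ^ n) ^ d * ∏ i, ENNReal.ofReal (k / √(N ys i + 1)) := by
    intro ys
    have e1 : ∑ e : Fin d → Fin n → Bool, φ (fun j i => sg (e i j) * ys j i) =
        ∏ i, ∑ ε : Fin n → Bool, (if |(x i : ℝ) - ∑ j, (sg (ε j) : ℝ) * (ys j i : ℝ)| ≤ K.R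
          then (1:ℝ≥0∞) else 0) := by
      rw [Finset.prod_univ_sum, Fintype.piFinset_univ]
      simp only [hφ]
      push_cast
      rfl
    rw [e1]
    have e2 : ((2:ℝ≥0∞) ^ n) ^ d * ∏ i, ENNReal.ofReal (k / √(N ys i + 1)) =
        ∏ i, ((2:ℝ≥0∞) ^ n * ENNReal.ofReal (k / √(N ys i + 1))) := by
      rw [Finset.prod_mul_distrib]; simp
    rw [e2]
    apply Finset.prod_le_prod'
    intro i _
    have := LO_d (fun j => (ys j i : ℝ)) A hA0 (x i) K.R k hkA
    rw [Finset.sum_boole, ← ENNReal.ofReal_natCast]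
    have e3 : (2:ℝ≥0∞) ^ n = ENNReal.ofReal (2 ^ n) := by
      rw [ENNReal.ofReal_pow (by norm_num)]; norm_num
    rw [e3, ← ENNReal.ofReal_mul (by positivity)]
    apply ENNReal.ofReal_le_ofReal
    refine this.trans (le_of_eq ?_)
    simp only [hN]; ring
  have h3 : Ex (wK K) n φ ≤ Ex (wK K) n (fun ys => ∏ i, ENNReal.ofReal (k / √(N ys i + 1))) := by
    have := h1.le.trans (Ex_mono h2)
    rw [Ex_mul] at this
    rwa [ENNReal.mul_le_mul_iff_right (by positivity) (by finiteness)] at this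
  have h4 : ∀ ys, ∏ i, ENNReal.ofReal (k / √(N ys i + 1)) ≤
      ∑ i, (ENNReal.ofReal (k ^ d / √(p / 4 * n) ^ d) +
        ENNReal.ofReal (k ^ d * Real.exp (p / 4 * n)) *
          ∏ j, (if A ≤ |(ys j i : ℝ)| then 2⁻¹ else 1)) := by
    intro ys
    refine (prod_le_sum_pow hd _).trans (Finset.sum_le_sum fun i _ => ?_)
    rw [← ENNReal.ofReal_pow (by positivity), div_pow]
    have e : ∏ j, (if A ≤ |(ys j i : ℝ)| then (2⁻¹:ℝ≥0∞) else 1) = ENNReal.ofReal ((1/2) ^ N ys i) := by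
      rw [Finset.prod_ite]
      simp only [Finset.prod_const, one_pow, mul_one]
      rw [ENNReal.ofReal_pow (by norm_num), one_div, ENNReal.ofReal_inv_of_pos (by norm_num)]
      norm_num [hN]
    rw [e]
    rcases le_or_gt (p / 4 * n) (N ys i) with h | h
    · refine le_trans ?_ le_self_add
      apply ENNReal.ofReal_le_ofReal
      gcongr
      linarith
    · refine le_trans ?_ le_add_self
      rw [← ENNReal.ofReal_mul (by positivity)]
      apply ENNReal.ofReal_le_ofReal
      have g1 : (1:ℝ) ≤ √(N ys i + 1) := by
        rw [Real.one_le_sqrt]; linarith [(Nat.cast_nonneg (N ys i) : (0:ℝ) ≤ _)]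
      have g2 : (1:ℝ) ≤ √(N ys i + 1) ^ d := one_le_pow₀ g1
      have g3 : Real.exp (-(N ys i : ℝ)) ≤ (1/2) ^ N ys i := by
        have : Real.exp (-(N ys i : ℝ)) = (Real.exp (-1)) ^ N ys i := by
          rw [← Real.exp_nat_mul]; congr 1; ring
        rw [this]
        have : Real.exp (-1) ≤ 1 / 2 := by
          rw [Real.exp_neg, one_div]
          have := Real.add_one_le_exp (1:ℝ)
          apply inv_anti₀ <;> linarith
        gcongr
      calc (k:ℝ) ^ d / √(N ys i + 1) ^ d ≤ k ^ d := div_le_self (by positivity) g2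
        _ = k ^ d * 1 := by ring
        _ ≤ k ^ d * (Real.exp (p / 4 * n) * (1 / 2) ^ N ys i) := by
          gcongr
          calc (1:ℝ) ≤ Real.exp (p / 4 * n - N ys i) := by
                rw [Real.one_le_exp_iff]; linarith
            _ = Real.exp (p / 4 * n) * Real.exp (-(N ys i : ℝ)) := by
                rw [← Real.exp_add]; rfl
            _ ≤ _ := by gcongr
        _ = _ := by ring
  refine h3.trans ((Ex_mono h4).trans ?_)
  rw [Ex_sum]
  simp_rw [Ex_add, Ex_mul, Ex_const _ (wK_sum K)]
  have h5 : ∀ i : Fin d, ENNReal.ofReal (k ^ d / √(p / 4 * n) ^ d) +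
      ENNReal.ofReal (k ^ d * Real.exp (p / 4 * n)) *
        Ex (wK K) n (fun ys => ∏ j, (if A ≤ |(ys j i : ℝ)| then 2⁻¹ else 1)) ≤
      ENNReal.ofReal (k ^ d * ((1 + √d ^ d) / √(p / 4) ^ d / √n ^ d)) := by
    intro i
    have := Ex_prod (wK K) (fun y => if A ≤ |(y i : ℝ)| then (2⁻¹:ℝ≥0∞) else 1) n
    rw [this]
    have hh := wK_half hc hc1 K i
    calc _ ≤ ENNReal.ofReal (k ^ d / √(p / 4 * n) ^ d) +
      ENNReal.ofReal (k ^ d * Real.exp (p / 4 * n)) * (ENNReal.ofReal (Real.exp (-p/2))) ^ n := by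
          gcongr
      _ = ENNReal.ofReal (k ^ d / √(p / 4 * n) ^ d + k ^ d * Real.exp (-(p / 4 * n))) := by
          rw [← ENNReal.ofReal_pow (by positivity), ← ENNReal.ofReal_mul (by positivity),
            ← ENNReal.ofReal_add (by positivity) (by positivity), mul_assoc, ← Real.exp_nat_mul,
            ← Real.exp_add]
          congr 4; ring
      _ ≤ _ := by
          apply ENNReal.ofReal_le_ofReal
          have := exp_bound hd (p / 4 * n) (by positivity)
          calc _ ≤ (k:ℝ) ^ d / √(p / 4 * n) ^ d + k ^ d * (√d / √(p / 4 * n)) ^ d := by gcongr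
            _ = _ := by
              rw [Real.sqrt_mul (by positivity), div_pow, mul_pow]
              field_simp
  refine (Finset.sum_le_sum fun i _ => h5 i).trans (le_of_eq ?_)
  rw [Finset.sum_const, Finset.card_univ, Fintype.card_fin, nsmul_eq_mul, ← ENNReal.ofReal_natCast,
    ← ENNReal.ofReal_mul (by positivity)]
  congr 1
  unfold Cc
  rw [← hk, ← hp]
  field_simp

end Aux

namespace Aux
variable {d : ℕ} {c₀ : ℝ}

lemma cv_dl (w : (Fin d → ℤ) → ℝ≥0∞) : cv w dl = w := by
  ext x
  unfold cv
  rw [tsum_eq_single x]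
  · simp [dl]
  · intro y hy
    have : x - y ≠ 0 := sub_ne_zero.mpr hy.symm
    simp [dl, this]

def C1 (d : ℕ) (c₀ : ℝ) : ℝ := c₀⁻¹ * (1 + √2 ^ d * Cc d c₀)

lemma C1_pos (hd : 0 < d) (hc : 0 < c₀) : 0 < C1 d c₀ := by
  have := Cc_pos hd hc
  unfold C1; positivity

lemma sup_bound (hd : 0 < d) (hc : 0 < c₀) (hc1 : c₀ ≤ 1) (K : AdmissibleKernel d c₀) (n : ℕ)
    (hn : 0 < n) (x : Fin d → ℤ) :
    (cv (wK K))^[n] dl x ≤ ENNReal.ofReal (C1 d c₀ / (K.R ^ d * √n ^ d)) := by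
  have hR : 0 < K.R := lt_of_lt_of_le one_pos K.R_ge_one
  have hCc := Cc_pos hd hc
  have hb : ∀ z, wK K z ≤ ENNReal.ofReal (c₀⁻¹ / K.R ^ d) := fun z =>
    ENNReal.ofReal_le_ofReal (K.J_upper z)
  obtain ⟨n, rfl⟩ : ∃ m, n = m + 1 := ⟨n - 1, by omega⟩
  rw [Function.iterate_succ_apply, cv_dl]
  rcases Nat.eq_zero_or_pos n with rfl | hn0
  · simp only [Function.iterate_zero, id]
    refine (hb x).trans (ENNReal.ofReal_le_ofReal ?_)
    unfold C1
    simp only [zero_add, Nat.cast_one, Real.sqrt_one, one_pow, mul_one]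
    gcongr
    have : 0 ≤ √2 ^ d * Cc d c₀ := by positivity
    have h2 : 0 < c₀⁻¹ := by positivity
    nlinarith
  · rw [cv_iter]
    have h1 : ∀ ys : Fin n → Fin d → ℤ, wK K (x - ∑ j, ys j) ≤ ENNReal.ofReal (c₀⁻¹ / K.R ^ d) *
        ∏ i, if |(x i : ℝ) - ∑ j, (ys j i : ℝ)| ≤ K.R then (1:ℝ≥0∞) else 0 := by
      intro ys
      by_cases h : ∀ i, |(x i : ℝ) - ∑ j, (ys j i : ℝ)| ≤ K.R
      · simp only [h, if_true, Finset.prod_const_one, mul_one]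
        exact hb _
      · push Not at h
        obtain ⟨i, hi⟩ := h
        have : wK K (x - ∑ j, ys j) = 0 := by
          apply wK_supp
          refine lt_of_lt_of_le hi ?_
          have := abs_le_supNorm (x - ∑ j, ys j) i
          simpa [Finset.sum_apply] using this
        rw [this]; exact zero_le
    refine (Ex_mono h1).trans ?_
    rw [Ex_mul]
    refine (mul_le_mul_right (conc hd hc hc1 K n hn0 x) _).trans ?_
    rw [← ENNReal.ofReal_mul (by positivity)]
    apply ENNReal.ofReal_le_ofReal
    have hn' : (1:ℝ) ≤ n := by exact_mod_cast hn0
    have h2 : √((n+1 : ℕ):ℝ) ≤ √2 * √n := by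
      rw [← Real.sqrt_mul (by norm_num)]
      apply Real.sqrt_le_sqrt; push_cast; linarith
    have h3 : √((n+1 : ℕ):ℝ) ^ d ≤ √2 ^ d * √n ^ d := by
      rw [← mul_pow]; gcongr
    have hs : 0 < √(n:ℝ) ^ d := by positivity
    have hs2 : 0 < √((n+1:ℕ):ℝ) ^ d := by positivity
    calc c₀⁻¹ / K.R ^ d * (Cc d c₀ / √n ^ d) = c₀⁻¹ * Cc d c₀ / K.R ^ d * (1 / √n ^ d) := by ring
      _ ≤ c₀⁻¹ * Cc d c₀ / K.R ^ d * (√2 ^ d / √((n+1 : ℕ):ℝ) ^ d) := by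
        refine mul_le_mul_of_nonneg_left ?_ (by positivity)
        rw [div_le_div_iff₀ hs hs2]; linarith
      _ = (c₀⁻¹ * (√2 ^ d * Cc d c₀)) / (K.R ^ d * √((n+1 : ℕ):ℝ) ^ d) := by field_simp
      _ ≤ _ := by
        unfold C1
        gcongr
        linarith

lemma mgf (K : AdmissibleKernel d c₀) (i : Fin d) (s : ℝ) :
    ∑' y, wK K y * ENNReal.ofReal (Real.exp (s * (y i : ℝ))) ≤
      ENNReal.ofReal (Real.exp (s ^ 2 * K.R ^ 2 / 2)) := by
  have h1 : ∑' y, wK K y * ENNReal.ofReal (Real.exp (s * (y i : ℝ))) =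
      ∑' y, wK K y * ENNReal.ofReal (Real.exp (-(s * (y i : ℝ)))) := by
    rw [← (Equiv.neg _).tsum_eq]
    congr 1; ext y
    simp [symm_neg (wK_symm K)]
  have h2 : 2 * ∑' y, wK K y * ENNReal.ofReal (Real.exp (s * (y i : ℝ))) ≤
      2 * ENNReal.ofReal (Real.exp (s ^ 2 * K.R ^ 2 / 2)) := by
    calc _ = ∑' y, wK K y * ENNReal.ofReal (2 * Real.cosh (s * (y i : ℝ))) := by
          rw [two_mul]
          nth_rewrite 2 [h1]
          rw [← ENNReal.tsum_add]
          congr 1; ext y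
          rw [← mul_add, ← ENNReal.ofReal_add (by positivity) (by positivity), Real.cosh_eq]
          congr 2; ring
      _ ≤ ∑' y, wK K y * ENNReal.ofReal (2 * Real.exp (s ^ 2 * K.R ^ 2 / 2)) := by
          apply ENNReal.tsum_le_tsum
          intro y
          by_cases hy : K.R < supNorm y
          · rw [wK_supp K y hy]; simp
          · have hy2 := (abs_le_supNorm y i).trans (not_lt.mp hy)
            apply mul_le_mul_right
            apply ENNReal.ofReal_le_ofReal
            have := Real.cosh_le_exp_half_sq (s * (y i : ℝ))
            have h3 : Real.exp ((s * (y i : ℝ)) ^ 2 / 2) ≤ Real.exp (s ^ 2 * K.R ^ 2 / 2) := by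
              apply Real.exp_le_exp.mpr
              rw [mul_pow, ← sq_abs (y i : ℝ)]
              gcongr
            linarith
      _ = _ := by
          rw [ENNReal.tsum_mul_right, wK_sum, one_mul, ENNReal.ofReal_mul (by norm_num)]
          norm_num
  rwa [ENNReal.mul_le_mul_iff_right (by norm_num) (by norm_num)] at h2

lemma mgf_iter (K : AdmissibleKernel d c₀) (i : Fin d) (s : ℝ) (n : ℕ) :
    Ex (wK K) n (fun ys => ENNReal.ofReal (Real.exp (s * ∑ j, (ys j i : ℝ)))) ≤
      ENNReal.ofReal (Real.exp (n * (s ^ 2 * K.R ^ 2 / 2))) := by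
  have : ∀ ys : Fin n → Fin d → ℤ, ENNReal.ofReal (Real.exp (s * ∑ j, (ys j i : ℝ))) =
      ∏ j, ENNReal.ofReal (Real.exp (s * (ys j i : ℝ))) := by
    intro ys
    rw [Finset.mul_sum, Real.exp_sum, ENNReal.ofReal_prod_of_nonneg (fun _ _ => by positivity)]
  simp_rw [this]
  rw [Ex_prod (wK K) (fun y => ENNReal.ofReal (Real.exp (s * (y i : ℝ)))), Real.exp_nat_mul,
    ENNReal.ofReal_pow (by positivity)]
  exact pow_le_pow_left' (mgf K i s) n

lemma supNorm_neg (x : Fin d → ℤ) : supNorm (-x) = supNorm x := by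
  unfold supNorm; simp

lemma tail (hd : 0 < d) (K : AdmissibleKernel d c₀) (n : ℕ) (hn : 0 < n) (r : ℝ) (hr : 0 ≤ r) :
    Ex (wK K) n (fun ys => if r ≤ supNorm (∑ j, ys j) then 1 else 0) ≤
      ENNReal.ofReal (2 * d * Real.exp (- (r ^ 2 / (2 * n * K.R ^ 2)))) := by
  have hR : 0 < K.R := lt_of_lt_of_le one_pos K.R_ge_one
  have hn' : (0:ℝ) < n := by exact_mod_cast hn
  set s := r / (n * K.R ^ 2) with hs
  have hs0 : 0 ≤ s := by positivity
  have h1 : ∀ ys : Fin n → Fin d → ℤ, (if r ≤ supNorm (∑ j, ys j) then (1:ℝ≥0∞) else 0) ≤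
      ∑ i : Fin d, ENNReal.ofReal (Real.exp (-(s * r))) *
        (ENNReal.ofReal (Real.exp (s * ∑ j, (ys j i : ℝ))) +
         ENNReal.ofReal (Real.exp ((-s) * ∑ j, (ys j i : ℝ)))) := by
    intro ys
    split_ifs with h
    · obtain ⟨i, hi⟩ := exists_supNorm hd (∑ j, ys j)
      refine le_trans ?_ (Finset.single_le_sum (fun _ _ => zero_le) (Finset.mem_univ i))
      rw [← ENNReal.ofReal_add (by positivity) (by positivity), ← ENNReal.ofReal_mul (by positivity),
        ← ENNReal.ofReal_one]
      apply ENNReal.ofReal_le_ofReal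
      rw [mul_add, ← Real.exp_add, ← Real.exp_add]
      rw [← hi] at h
      simp only [Finset.sum_apply, Int.cast_sum] at h
      set S := ∑ j, (ys j i : ℝ)
      have e1 := Real.exp_pos (-(s * r) + s * S)
      have e2 := Real.exp_pos (-(s * r) + -s * S)
      rcases le_abs.mp h with h | h
      · have : 1 ≤ Real.exp (-(s * r) + s * S) := by rw [Real.one_le_exp_iff]; nlinarith
        linarith
      · have : 1 ≤ Real.exp (-(s * r) + -s * S) := by rw [Real.one_le_exp_iff]; nlinarith
        linarith
    · exact zero_le
  refine (Ex_mono h1).trans ?_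
  rw [Ex_sum]
  simp_rw [Ex_mul, Ex_add]
  have h2 : ∀ i : Fin d, ENNReal.ofReal (Real.exp (-(s * r))) *
      (Ex (wK K) n (fun ys => ENNReal.ofReal (Real.exp (s * ∑ j, (ys j i : ℝ)))) +
        Ex (wK K) n (fun ys => ENNReal.ofReal (Real.exp ((-s) * ∑ j, (ys j i : ℝ))))) ≤
      ENNReal.ofReal (2 * Real.exp (- (r ^ 2 / (2 * n * K.R ^ 2)))) := by
    intro i
    refine (mul_le_mul_right (add_le_add (mgf_iter K i s n) (mgf_iter K i (-s) n)) _).trans ?_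
    rw [← ENNReal.ofReal_add (by positivity) (by positivity), ← ENNReal.ofReal_mul (by positivity)]
    apply ENNReal.ofReal_le_ofReal
    rw [neg_sq, ← two_mul, mul_left_comm, ← Real.exp_add]
    apply le_of_eq
    congr 2
    rw [hs]; field_simp; ring
  refine (Finset.sum_le_sum fun i _ => h2 i).trans (le_of_eq ?_)
  rw [Finset.sum_const, Finset.card_univ, Fintype.card_fin, nsmul_eq_mul, ← ENNReal.ofReal_natCast,
    ← ENNReal.ofReal_mul (by positivity)]
  congr 1; ring

def C2 (d : ℕ) (c₀ : ℝ) : ℝ := 12 * d * √3 ^ d * C1 d c₀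

lemma C2_pos (hd : 0 < d) (hc : 0 < c₀) : 0 < C2 d c₀ := by
  have := C1_pos hd hc
  have : (0:ℝ) < d := by exact_mod_cast hd
  unfold C2; positivity

lemma supNorm_add (x y : Fin d → ℤ) (hd : 0 < d) : supNorm (x + y) ≤ supNorm x + supNorm y := by
  obtain ⟨i, hi⟩ := exists_supNorm hd (x + y)
  rw [← hi]
  have h1 := abs_le_supNorm x i
  have h2 := abs_le_supNorm y i
  have h3 := abs_add_le (x i : ℝ) (y i)
  simp only [Pi.add_apply, Int.cast_add]
  linarith

lemma heat2 (hd : 0 < d) (hc : 0 < c₀) (hc1 : c₀ ≤ 1) (K : AdmissibleKernel d c₀) (m k : ℕ)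
    (hm : 0 < m) (hk : 0 < k) (hm3 : m + k ≤ 3 * m) (hk3 : m + k ≤ 3 * k) (x : Fin d → ℤ) :
    (cv (wK K))^[m + k] dl x ≤ ENNReal.ofReal (C2 d c₀ / (K.R ^ d * √((m + k : ℕ) : ℝ) ^ d) *
      Real.exp (- (supNorm x ^ 2 / (8 * (m + k : ℕ) * K.R ^ 2)))) := by
  have hR : 0 < K.R := lt_of_lt_of_le one_pos K.R_ge_one
  have hC1 := C1_pos hd hc
  have hd' : (0:ℝ) < d := by exact_mod_cast hd
  set p := fun n => (cv (wK K))^[n] dl with hp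
  set r := supNorm x / 2 with hr
  have hr0 : 0 ≤ r := by have := supNorm_nonneg x; positivity
  set n := m + k with hn
  have hn0 : (0:ℝ) < (n:ℝ) := by exact_mod_cast (by omega : 0 < n)
  have sb : ∀ l : ℕ, 0 < l → n ≤ 3 * l → ∀ z, p l z ≤
      ENNReal.ofReal (√3 ^ d * C1 d c₀ / (K.R ^ d * √(n:ℝ) ^ d)) := by
    intro l hl hl3 z
    refine (sup_bound hd hc hc1 K l hl z).trans (ENNReal.ofReal_le_ofReal ?_)
    have hl' : (0:ℝ) < l := by exact_mod_cast hl
    have : √(n:ℝ) ^ d ≤ √3 ^ d * √(l:ℝ) ^ d := by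
      rw [← mul_pow, ← Real.sqrt_mul (by norm_num)]
      gcongr; exact_mod_cast hl3
    rw [div_le_div_iff₀ (by positivity) (by positivity)]
    calc C1 d c₀ * (K.R ^ d * √(n:ℝ) ^ d) ≤ C1 d c₀ * (K.R ^ d * (√3 ^ d * √(l:ℝ) ^ d)) := by gcongr
      _ = _ := by ring
  have tb : ∀ l : ℕ, 0 < l → l ≤ n →
      Ex (wK K) l (fun ys => if r ≤ supNorm (∑ j, ys j) then 1 else 0) ≤
      ENNReal.ofReal (2 * d * Real.exp (- (supNorm x ^ 2 / (8 * n * K.R ^ 2)))) := by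
    intro l hl hln
    refine (tail hd K l hl r hr0).trans (ENNReal.ofReal_le_ofReal ?_)
    have hl' : (0:ℝ) < l := by exact_mod_cast hl
    have hln' : (l:ℝ) ≤ n := by exact_mod_cast hln
    have hle : supNorm x ^ 2 / (8 * n * K.R ^ 2) ≤ r ^ 2 / (2 * l * K.R ^ 2) := by
      rw [hr, div_pow, div_div]
      apply div_le_div_of_nonneg_left (sq_nonneg _) (by positivity)
      nlinarith [mul_le_mul_of_nonneg_right hln' (sq_nonneg K.R)]
    have := Real.exp_le_exp.mpr (neg_le_neg hle)
    exact mul_le_mul_of_nonneg_left this (by positivity)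
  have h1 : p n x ≤ (cv (wK K))^[m] (fun z => p k z * (if r ≤ supNorm (x - z) then 1 else 0)) x +
      (cv (wK K))^[m] (fun z => p k z * (if r ≤ supNorm z then 1 else 0)) x := by
    have : p n x = (cv (wK K))^[m] (p k) x := by
      simp only [hp, hn, Function.iterate_add_apply]
    rw [this, cv_iter, cv_iter, cv_iter, ← Ex_add]
    apply Ex_mono
    intro ys
    set z := x - ∑ j, ys j
    have h0 : supNorm x ≤ supNorm (x - z) + supNorm z := by
      have := supNorm_add (x - z) z hd
      simpa using this
    rw [← mul_add]
    have : (1:ℝ≥0∞) ≤ (if r ≤ supNorm (x - z) then 1 else 0) + (if r ≤ supNorm z then 1 else 0) := by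
      by_cases h : r ≤ supNorm z
      · simp [h]
      · have : r ≤ supNorm (x - z) := by rw [hr] at h ⊢; linarith [not_le.mp h]
        simp [this]
    calc p k z = p k z * 1 := by simp
      _ ≤ _ := by gcongr
  set S := ENNReal.ofReal (√3 ^ d * C1 d c₀ / (K.R ^ d * √(n:ℝ) ^ d)) with hS
  set T := ENNReal.ofReal (2 * d * Real.exp (- (supNorm x ^ 2 / (8 * n * K.R ^ 2)))) with hT
  have h2 : (cv (wK K))^[m] (fun z => p k z * (if r ≤ supNorm (x - z) then 1 else 0)) x ≤ S * T := by
    rw [cv_iter]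
    calc _ ≤ Ex (wK K) m (fun ys => S * (if r ≤ supNorm (∑ j, ys j) then 1 else 0)) := by
          apply Ex_mono; intro ys
          simp only [sub_sub_cancel]
          gcongr
          exact sb k hk hk3 _
      _ ≤ _ := by
          rw [Ex_mul]; gcongr; exact tb m hm (by omega)
  have h3 : (cv (wK K))^[m] (fun z => p k z * (if r ≤ supNorm z then 1 else 0)) x ≤ S * T := by
    rw [cv_pair]
    calc _ ≤ ∑' z, S * (p k z * (if r ≤ supNorm z then 1 else 0)) := by
          apply ENNReal.tsum_le_tsum; intro z
          gcongr
          exact sb m hm hm3 _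
      _ = S * (cv (wK K))^[k] (fun z => if r ≤ supNorm z then 1 else 0) 0 := by
          rw [ENNReal.tsum_mul_left]
          congr 1
          exact cv_pair0 (wK K) (fun z => if r ≤ supNorm z then 1 else 0)
            (fun z => by simp only [supNorm_neg]) k
      _ ≤ _ := by
          rw [cv_iter]
          gcongr
          simp only [zero_sub, supNorm_neg]
          exact tb k hk (by omega)
  refine h1.trans ((add_le_add h2 h3).trans ?_)
  rw [hS, hT, ← ENNReal.ofReal_mul (by positivity), ← ENNReal.ofReal_add (by positivity) (by positivity)]
  apply ENNReal.ofReal_le_ofReal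
  unfold C2
  set e := Real.exp (- (supNorm x ^ 2 / (8 * n * K.R ^ 2)))
  have he : 0 < e := Real.exp_pos _
  calc _ = 4 * d * √3 ^ d * C1 d c₀ / (K.R ^ d * √(n:ℝ) ^ d) * e := by ring
    _ ≤ _ := by gcongr; norm_num

lemma heat (hd : 0 < d) (hc : 0 < c₀) (hc1 : c₀ ≤ 1) (K : AdmissibleKernel d c₀) (n : ℕ)
    (hn : 0 < n) (x : Fin d → ℤ) :
    (cv (wK K))^[n] dl x ≤ ENNReal.ofReal (C2 d c₀ / (K.R ^ d * √n ^ d) *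
      Real.exp (- (supNorm x ^ 2 / (8 * n * K.R ^ 2)))) := by
  rcases Nat.lt_or_ge 1 n with h | h
  · have := heat2 hd hc hc1 K (n / 2) (n - n / 2) (by omega) (by omega) (by omega) (by omega) x
    rwa [show n / 2 + (n - n / 2) = n by omega] at this
  · obtain rfl : n = 1 := by omega
    have hR : 0 < K.R := lt_of_lt_of_le one_pos K.R_ge_one
    have hC1 := C1_pos hd hc
    by_cases hx : K.R < supNorm x
    · rw [Function.iterate_one, cv_dl, wK_supp K x hx]; exact zero_le
    · refine (sup_bound hd hc hc1 K 1 one_pos x).trans (ENNReal.ofReal_le_ofReal ?_)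
      have hd' : (1:ℝ) ≤ d := by exact_mod_cast hd
      have h3 : (1:ℝ) ≤ √3 ^ d := one_le_pow₀ (by rw [Real.one_le_sqrt]; norm_num)
      have h4 : (1:ℝ)/12 ≤ Real.exp (- (supNorm x ^ 2 / (8 * (1:ℕ) * K.R ^ 2))) := by
        have : supNorm x ^ 2 / (8 * (1:ℕ) * K.R ^ 2) ≤ 1/8 := by
          rw [div_le_iff₀ (by positivity)]
          have : supNorm x ^ 2 ≤ K.R ^ 2 := by
            have := supNorm_nonneg x
            have := not_lt.mp hx
            gcongr
          push_cast; linarith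
        have h5 := Real.add_one_le_exp (- (supNorm x ^ 2 / (8 * (1:ℕ) * K.R ^ 2)))
        linarith
      set e := Real.exp (- (supNorm x ^ 2 / (8 * (1:ℕ) * K.R ^ 2)))
      have h6 : 1 ≤ d * √3 ^ d * (12 * e) := by
        have : 1 ≤ 12 * e := by linarith
        have h7 : 1 ≤ d * √3 ^ d := by nlinarith
        nlinarith
      unfold C2
      calc C1 d c₀ / (K.R ^ d * √((1:ℕ):ℝ) ^ d) = C1 d c₀ / (K.R ^ d * √((1:ℕ):ℝ) ^ d) * 1 := by ring
        _ ≤ C1 d c₀ / (K.R ^ d * √((1:ℕ):ℝ) ^ d) * (d * √3 ^ d * (12 * e)) := by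
          gcongr
        _ = _ := by ring

end Aux

namespace Aux
variable {d : ℕ} {c₀ : ℝ}

lemma tele (A : ℝ) (hA : 1 ≤ A) (M : ℕ) :
    ∑ n ∈ Finset.range M, (1 / √(A ^ 2 + (n + 1 : ℕ))) ^ 3 ≤ 2 / A - 2 / √(A ^ 2 + M) := by
  induction M with
  | zero => simp [Real.sqrt_sq (by linarith : 0 ≤ A)]
  | succ M ih =>
    rw [Finset.sum_range_succ]
    set u := √(A ^ 2 + M) with hu
    set z := √(A ^ 2 + (M + 1 : ℕ)) with hz
    have hu0 : 0 < u := by rw [hu]; positivity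
    have hz0 : 0 < z := by rw [hz]; positivity
    have huz : u ≤ z := by rw [hu, hz]; apply Real.sqrt_le_sqrt; push_cast; linarith
    have hsq : z ^ 2 = u ^ 2 + 1 := by
      rw [hu, hz, Real.sq_sqrt (by positivity), Real.sq_sqrt (by positivity)]; push_cast; ring
    have : (1 / z) ^ 3 ≤ 2 / u - 2 / z := by
      have e : 2 / u - 2 / z = 2 * (1 / (u * z * (z + u))) := by
        have : (z - u) * (z + u) = 1 := by nlinarith
        field_simp
        linarith
      rw [e]
      have h1 : u * z * (z + u) ≤ 2 * z ^ 3 := by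
        have : u * (z * (z + u)) ≤ z * (z * (z + z)) := by gcongr
        nlinarith
      rw [div_pow, one_pow, ← mul_div_assoc, mul_one, div_le_div_iff₀ (by positivity) (by positivity)]
      linarith
    linarith

def C3 (d : ℕ) : ℝ := 3 * (4 * √d) ^ d

lemma term_bound (hd : 2 < d) (ρ : ℝ) (_hρ : 0 ≤ ρ) (N : ℕ) (hN : 0 < N) :
    1 / √N ^ d * Real.exp (-(ρ ^ 2 / (16 * N))) ≤
      C3 d * (1 / (max 1 ρ) ^ (d - 3)) * (1 / √((max 1 ρ) ^ 2 + N)) ^ 3 := by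
  have hN' : (1:ℝ) ≤ N := by exact_mod_cast hN
  have hd' : (1:ℝ) ≤ d := by exact_mod_cast (by omega : 1 ≤ d)
  set A := max 1 ρ with hA
  have hA1 : 1 ≤ A := le_max_left _ _
  have hD : 1 ≤ (4 * √d) ^ d := by
    apply one_le_pow₀
    have : 1 ≤ √(d:ℝ) := by rw [Real.one_le_sqrt]; exact hd'
    linarith
  have key : ∀ B : ℝ, 0 < B → A ^ 2 ≤ B ^ 2 → (N:ℝ) ≤ B ^ 2 →
      1 / B ^ d ≤ 3 * (1 / A ^ (d-3)) * (1 / √(A ^ 2 + N)) ^ 3 := by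
    intro B hB hAB hNB
    have h1 : A ≤ B := by nlinarith
    have h2 : √(A ^ 2 + N) ≤ √2 * B := by
      rw [Real.sqrt_le_left (by positivity), mul_pow, Real.sq_sqrt (by norm_num)]; linarith
    have h3 : √(A ^ 2 + N) ^ 3 ≤ 3 * B ^ 3 := by
      calc _ ≤ (√2 * B) ^ 3 := by gcongr
        _ = √2 ^ 3 * B ^ 3 := by ring
        _ ≤ 3 * B ^ 3 := by
          gcongr
          have : √2 ^ 3 = 2 * √2 := by
            rw [pow_succ, Real.sq_sqrt (by norm_num)]
          rw [this]
          have : √2 ≤ 3 / 2 := by rw [Real.sqrt_le_left (by norm_num)]; norm_num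
          linarith
    have e : B ^ d = B ^ (d - 3) * B ^ 3 := by rw [← pow_add]; congr 1; omega
    have e2 : 3 * (1 / A ^ (d-3)) * (1 / √(A ^ 2 + N)) ^ 3 = 3 / (A ^ (d-3) * √(A ^ 2 + N) ^ 3) := by
      rw [div_pow, one_pow]; field_simp
    rw [e, e2, div_le_div_iff₀ (by positivity) (by positivity), one_mul]
    calc A ^ (d-3) * √(A ^ 2 + N) ^ 3 ≤ B ^ (d-3) * (3 * B ^ 3) := by gcongr
      _ = _ := by ring
  unfold C3
  rcases le_or_gt (A ^ 2) N with h | h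
  · have k := key (√N) (by positivity) (by rw [Real.sq_sqrt (by positivity)]; exact h)
      (by rw [Real.sq_sqrt (by positivity)])
    have he : Real.exp (-(ρ ^ 2 / (16 * N))) ≤ 1 := by
      rw [Real.exp_le_one_iff]; have : 0 ≤ ρ ^ 2 / (16 * N) := by positivity
      linarith
    calc _ ≤ 1 / √N ^ d * 1 := by gcongr
      _ ≤ 1 * (3 * (1 / A ^ (d-3)) * (1 / √(A ^ 2 + N)) ^ 3) := by linarith
      _ ≤ (4 * √d) ^ d * (3 * (1 / A ^ (d-3)) * (1 / √(A ^ 2 + N)) ^ 3) := by gcongr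
      _ = _ := by ring
  · have hAρ : A = ρ := by
      rw [hA]; apply max_eq_right
      by_contra hh
      have : A = 1 := by rw [hA]; exact max_eq_left (not_le.mp hh).le
      rw [this] at h; linarith
    have hρ1 : 0 < ρ := by linarith
    have k := key A (by positivity) le_rfl h.le
    have he := exp_bound (by omega : 0 < d) (ρ ^ 2 / (16 * N)) (by positivity)
    have e1 : √(ρ ^ 2 / (16 * N)) = ρ / (4 * √N) := by
      rw [Real.sqrt_div (by positivity), Real.sqrt_sq hρ1.le, Real.sqrt_mul (by norm_num),
        show (16:ℝ) = 4 ^ 2 by norm_num, Real.sqrt_sq (by norm_num)]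
    rw [e1] at he
    calc _ ≤ 1 / √N ^ d * (√d / (ρ / (4 * √N))) ^ d := by gcongr
      _ = (4 * √d) ^ d * (1 / A ^ d) := by
        rw [hAρ, ← one_div_pow, ← one_div_pow, ← mul_pow, ← mul_pow]
        congr 1; field_simp
      _ ≤ (4 * √d) ^ d * (3 * (1 / A ^ (d-3)) * (1 / √(A ^ 2 + N)) ^ 3) := by gcongr
      _ = _ := by ring

def C4 (d : ℕ) (c₀ : ℝ) : ℝ := 3 * C2 d c₀ * C3 d * 2

lemma C4_pos (hd : 0 < d) (hc : 0 < c₀) : 0 < C4 d c₀ := by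
  have := C2_pos hd hc
  have : (0:ℝ) < d := by exact_mod_cast hd
  unfold C4 C3; positivity

lemma green (hd : 2 < d) (hc : 0 < c₀) (hc1 : c₀ ≤ 1) (K : AdmissibleKernel d c₀) (β : ℝ)
    (hβ : 0 ≤ β) (hβ1 : β < 1) (x : Fin d → ℤ) :
    ∑' n : ℕ, ENNReal.ofReal β ^ n * (cv (wK K))^[n+1] dl x ≤
      ENNReal.ofReal (C4 d c₀ / K.R ^ d * (1 / (max 1 (supNorm x / K.R)) ^ (d - 2)) *
        Real.exp (-(√(1 - β) * (supNorm x / K.R) / 2))) := by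
  have hR : 0 < K.R := lt_of_lt_of_le one_pos K.R_ge_one
  have hd0 : 0 < d := by omega
  have hC2 := C2_pos hd0 hc
  have hdr : (0:ℝ) < d := by exact_mod_cast hd0
  set ρ := supNorm x / K.R with hρ
  have hρ0 : 0 ≤ ρ := div_nonneg (supNorm_nonneg x) hR.le
  set A := max 1 ρ with hA
  have hA1 : 1 ≤ A := le_max_left _ _
  set e := Real.exp (-(√(1 - β) * ρ / 2)) with he
  have hC3 : 0 < C3 d := by unfold C3; positivity
  have h1 : ∀ n : ℕ, ENNReal.ofReal β ^ n * (cv (wK K))^[n+1] dl x ≤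
      ENNReal.ofReal ((3 * C2 d c₀ / K.R ^ d * e * (C3 d * (1 / A ^ (d - 3)))) *
        (1 / √(A ^ 2 + (n + 1 : ℕ))) ^ 3) := by
    intro n
    refine (mul_le_mul_right (heat hd0 hc hc1 K (n+1) (by omega) x) _).trans ?_
    rw [← ENNReal.ofReal_pow hβ, ← ENNReal.ofReal_mul (by positivity)]
    apply ENNReal.ofReal_le_ofReal
    set N := n + 1 with hN
    have hN0 : (0:ℝ) < N := by rw [hN]; positivity
    have tb := term_bound hd ρ hρ0 N (by omega)
    have b1 : β ^ n ≤ 3 * Real.exp (-((1 - β) * N)) := by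
      have h1 : β ≤ Real.exp (-(1 - β)) := by
        have := Real.add_one_le_exp (-(1 - β)); linarith
      have h2 : β ^ n ≤ Real.exp (-(1 - β)) ^ n := by gcongr
      rw [← Real.exp_nat_mul] at h2
      have h3 : Real.exp (n * (-(1 - β))) = Real.exp (1 - β) * Real.exp (-((1 - β) * N)) := by
        rw [← Real.exp_add, hN]; congr 1; push_cast; ring
      rw [h3] at h2
      refine h2.trans ?_
      gcongr
      have h4 : Real.exp (1 - β) ≤ Real.exp 1 := Real.exp_le_exp.mpr (by linarith)
      have := Real.exp_one_lt_d9
      linarith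
    have b2 : supNorm x ^ 2 / (8 * (N:ℝ) * K.R ^ 2) = ρ ^ 2 / (16 * N) + ρ ^ 2 / (16 * N) := by
      rw [hρ]; field_simp; ring
    have b3 : Real.exp (-((1 - β) * N)) * Real.exp (-(ρ ^ 2 / (16 * N))) ≤ e := by
      rw [← Real.exp_add, he]
      apply Real.exp_le_exp.mpr
      have hs : √(1 - β) ^ 2 = 1 - β := Real.sq_sqrt (by linarith)
      have hs0 := Real.sqrt_nonneg (1 - β)
      set s := √(1 - β)
      rw [← hs]
      have : s * ρ / 2 ≤ s ^ 2 * N + ρ ^ 2 / (16 * N) := by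
        rw [← sub_nonneg]
        have : s ^ 2 * N + ρ ^ 2 / (16 * N) - s * ρ / 2 = (4 * s * N - ρ) ^ 2 / (16 * N) := by
          field_simp; ring
        rw [this]; positivity
      linarith
    rw [b2, neg_add, Real.exp_add]
    set E := Real.exp (-(ρ ^ 2 / (16 * N)))
    have hE : 0 < E := Real.exp_pos _
    calc β ^ n * (C2 d c₀ / (K.R ^ d * √(N:ℝ) ^ d) * (E * E))
        ≤ (3 * Real.exp (-((1 - β) * N))) * (C2 d c₀ / (K.R ^ d * √(N:ℝ) ^ d) * (E * E)) := by gcongr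
      _ = 3 * C2 d c₀ / K.R ^ d * (Real.exp (-((1 - β) * N)) * E) * (1 / √(N:ℝ) ^ d * E) := by
          field_simp
      _ ≤ 3 * C2 d c₀ / K.R ^ d * e * (C3 d * (1 / A ^ (d - 3)) * (1 / √(A ^ 2 + N)) ^ 3) := by
          gcongr
      _ = _ := by ring
  refine (ENNReal.tsum_le_tsum h1).trans ?_
  apply ENNReal.tsum_le_of_sum_range_le
  intro M
  rw [← ENNReal.ofReal_sum_of_nonneg (fun _ _ => by positivity)]
  apply ENNReal.ofReal_le_ofReal
  rw [← Finset.mul_sum]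
  have ht : ∑ n ∈ Finset.range M, (1 / √(A ^ 2 + (n + 1 : ℕ))) ^ 3 ≤ 2 / A := by
    have := tele A hA1 M
    have h2 : 0 ≤ 2 / √(A ^ 2 + M) := by positivity
    linarith
  calc _ ≤ (3 * C2 d c₀ / K.R ^ d * e * (C3 d * (1 / A ^ (d - 3)))) * (2 / A) := by gcongr
    _ = _ := by
      unfold C4
      have : A ^ (d - 2) = A ^ (d - 3) * A := by rw [← pow_succ]; congr 1; omega
      rw [this]; field_simp

end Aux

namespace Aux
variable {d : ℕ} {c₀ : ℝ}

lemma int_exp_sum (a : ℝ) (ha : 0 < a) :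
    ∑' z : ℤ, ENNReal.ofReal (Real.exp (-a * |(z:ℝ)|)) ≠ ⊤ := by
  have hs : Summable fun n : ℕ => Real.exp (-a * n) := by
    have : ∀ n : ℕ, Real.exp (-a * n) = Real.exp (-a) ^ n := fun n => by
      rw [← Real.exp_nat_mul]; ring_nf
    simp_rw [this]
    exact summable_geometric_of_lt_one (Real.exp_nonneg _) (by simpa using ha)
  have : Summable fun z : ℤ => Real.exp (-a * |(z:ℝ)|) := by
    apply Summable.of_nat_of_neg
    · simpa using hs
    · simpa using hs
  exact this.tsum_ofReal_ne_top

lemma exp_sum (hd : 0 < d) (a : ℝ) (ha : 0 < a) :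
    ∑' x : Fin d → ℤ, ENNReal.ofReal (Real.exp (-a * supNorm x)) ≠ ⊤ := by
  have hd' : (0:ℝ) < d := by exact_mod_cast hd
  have key : ∀ x : Fin d → ℤ, ENNReal.ofReal (Real.exp (-a * supNorm x)) ≤
      ∏ i, ENNReal.ofReal (Real.exp (-(a / d) * |((x i : ℤ):ℝ)|)) := by
    intro x
    rw [← ENNReal.ofReal_prod_of_nonneg (fun i _ => Real.exp_nonneg _), ← Real.exp_sum]
    apply ENNReal.ofReal_le_ofReal
    apply Real.exp_le_exp.mpr
    calc -a * supNorm x = ∑ i : Fin d, -(a / d) * supNorm x := by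
          simp; field_simp
      _ ≤ _ := Finset.sum_le_sum fun i _ => by
          have := abs_le_supNorm x i
          have h2 : 0 < a / d := by positivity
          nlinarith
  refine ne_top_of_le_ne_top ?_ (ENNReal.tsum_le_tsum key)
  rw [tsum_pi_prod (fun z : ℤ => ENNReal.ofReal (Real.exp (-(a / d) * |(z:ℝ)|)))]
  exact ENNReal.pow_ne_top (int_exp_sum _ (by positivity))

lemma sqNorm_le (x : Fin d → ℤ) : sqNorm x ≤ d * supNorm x ^ 2 := by
  unfold sqNorm
  calc _ ≤ ∑ i : Fin d, supNorm x ^ 2 := Finset.sum_le_sum fun i _ => by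
        rw [← sq_abs]; gcongr; exact abs_le_supNorm x i
    _ = _ := by simp

lemma sq_exp_sum (hd : 0 < d) (a : ℝ) (ha : 0 < a) :
    ∑' x : Fin d → ℤ, ENNReal.ofReal (sqNorm x) * ENNReal.ofReal (Real.exp (-a * supNorm x)) ≠ ⊤ := by
  have key : ∀ x : Fin d → ℤ,
      ENNReal.ofReal (sqNorm x) * ENNReal.ofReal (Real.exp (-a * supNorm x)) ≤
      ENNReal.ofReal (d * (8 / a ^ 2)) * ENNReal.ofReal (Real.exp (-(a / 2) * supNorm x)) := by
    intro x
    rw [← ENNReal.ofReal_mul (sqNorm_nonneg x), ← ENNReal.ofReal_mul (by positivity)]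
    apply ENNReal.ofReal_le_ofReal
    have e : Real.exp (-a * supNorm x) = Real.exp (-(a/2) * supNorm x) * Real.exp (-(a/2) * supNorm x) := by
      rw [← Real.exp_add]; ring_nf
    rw [e, ← mul_assoc]
    refine mul_le_mul_of_nonneg_right ?_ (Real.exp_nonneg _)
    have h0 := supNorm_nonneg x
    have h1 := Real.quadratic_le_exp_of_nonneg (show 0 ≤ a / 2 * supNorm x by positivity)
    have h2 : Real.exp (-(a/2) * supNorm x) * Real.exp (a/2 * supNorm x) = 1 := by
      rw [← Real.exp_add]; simp
    calc sqNorm x * Real.exp (-(a/2) * supNorm x)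
        ≤ (d * supNorm x ^ 2) * Real.exp (-(a/2) * supNorm x) := by gcongr; exact sqNorm_le x
      _ ≤ (d * ((8 / a^2) * Real.exp (a/2 * supNorm x))) * Real.exp (-(a/2) * supNorm x) := by
          gcongr
          have : supNorm x ^ 2 = 8 / a ^ 2 * ((a / 2 * supNorm x) ^ 2 / 2) := by field_simp; ring
          rw [this]; gcongr; nlinarith [show 0 ≤ a / 2 * supNorm x by positivity]
      _ = d * (8 / a^2) * (Real.exp (-(a/2) * supNorm x) * Real.exp (a/2 * supNorm x)) := by ring
      _ = _ := by rw [h2, mul_one]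
  refine ne_top_of_le_ne_top ?_ (ENNReal.tsum_le_tsum key)
  rw [ENNReal.tsum_mul_left]
  exact ENNReal.mul_ne_top ENNReal.ofReal_ne_top (exp_sum hd _ (by positivity))

/-- second moment -/
def m2 (f : (Fin d → ℤ) → ℝ≥0∞) : ℝ≥0∞ := ∑' x, ENNReal.ofReal (sqNorm x) * f x
def m0 (f : (Fin d → ℤ) → ℝ≥0∞) : ℝ≥0∞ := ∑' x, f x

lemma fin_mom (hd : 0 < d) {f : (Fin d → ℤ) → ℝ≥0∞}
    (h : ∃ C > (0:ℝ), ∃ c > (0:ℝ), ∀ x, f x ≤ ENNReal.ofReal (C * Real.exp (-c * supNorm x))) :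
    m0 f ≠ ⊤ ∧ m2 f ≠ ⊤ := by
  obtain ⟨C, hC, c, hc, h⟩ := h
  simp_rw [ENNReal.ofReal_mul hC.le] at h
  constructor
  · refine ne_top_of_le_ne_top ?_ (ENNReal.tsum_le_tsum h)
    rw [ENNReal.tsum_mul_left]
    exact ENNReal.mul_ne_top ENNReal.ofReal_ne_top (exp_sum hd _ hc)
  · have h' : ∀ x, ENNReal.ofReal (sqNorm x) * f x ≤ ENNReal.ofReal C *
      (ENNReal.ofReal (sqNorm x) * ENNReal.ofReal (Real.exp (-c * supNorm x))) := by
      intro x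
      calc _ ≤ ENNReal.ofReal (sqNorm x) * (ENNReal.ofReal C * ENNReal.ofReal (Real.exp (-c * supNorm x))) := by
            gcongr; exact h x
        _ = _ := by ring
    refine ne_top_of_le_ne_top ?_ (ENNReal.tsum_le_tsum h')
    rw [ENNReal.tsum_mul_left]
    exact ENNReal.mul_ne_top ENNReal.ofReal_ne_top (sq_exp_sum hd _ hc)

lemma sqNorm_neg (x : Fin d → ℤ) : sqNorm (-x) = sqNorm x := by simp [sqNorm]

lemma par (a b : Fin d → ℤ) : sqNorm (a + b) + sqNorm (a - b) = 2 * sqNorm a + 2 * sqNorm b := by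
  unfold sqNorm
  rw [Finset.mul_sum, Finset.mul_sum, ← Finset.sum_add_distrib, ← Finset.sum_add_distrib]
  apply Finset.sum_congr rfl; intro i _; simp; ring

lemma par' (a b : Fin d → ℤ) : ENNReal.ofReal (sqNorm (a + b)) + ENNReal.ofReal (sqNorm (a - b)) =
    2 * ENNReal.ofReal (sqNorm a) + 2 * ENNReal.ofReal (sqNorm b) := by
  have h := par a b
  rw [← ENNReal.ofReal_add (sqNorm_nonneg _) (sqNorm_nonneg _), h,
    ENNReal.ofReal_add (by have := sqNorm_nonneg a; positivity) (by have := sqNorm_nonneg b; positivity),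
    ENNReal.ofReal_mul (by norm_num), ENNReal.ofReal_mul (by norm_num)]
  simp

lemma cv_m (w f φ : (Fin d → ℤ) → ℝ≥0∞) :
    ∑' x, φ x * cv w f x = ∑' y, ∑' z, φ (y + z) * (w y * f z) := by
  unfold cv
  simp_rw [← ENNReal.tsum_mul_left]
  rw [ENNReal.tsum_comm]
  congr 1; ext y
  rw [← (Equiv.addLeft y).tsum_eq]
  simp

lemma cv_m0 (w f : (Fin d → ℤ) → ℝ≥0∞) : m0 (cv w f) = m0 w * m0 f := by
  have := cv_m w f (fun _ => 1)
  simp only [one_mul] at this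
  unfold m0; rw [this]
  simp_rw [ENNReal.tsum_mul_left, ENNReal.tsum_mul_right]

lemma cv_m2 (w f : (Fin d → ℤ) → ℝ≥0∞) (hw : ∀ x, w (-x) = w x) :
    m2 (cv w f) = m2 w * m0 f + m0 w * m2 f := by
  have h1 := cv_m w f (fun x => ENNReal.ofReal (sqNorm x))
  have h2 : m2 (cv w f) = ∑' y, ∑' z, ENNReal.ofReal (sqNorm (z - y)) * (w y * f z) := by
    unfold m2; rw [h1, ← (Equiv.neg _).tsum_eq]
    simp only [Equiv.neg_apply, hw]
    congr 1; ext y; congr 1; ext z; rw [neg_add_eq_sub]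
  have h3 : 2 * m2 (cv w f) = 2 * (m2 w * m0 f + m0 w * m2 f) := by
    rw [two_mul]; nth_rewrite 2 [h2]; unfold m2; rw [h1]
    rw [← ENNReal.tsum_add]
    simp_rw [← ENNReal.tsum_add, ← add_mul]
    have : ∀ y z, (ENNReal.ofReal (sqNorm (y + z)) + ENNReal.ofReal (sqNorm (z - y))) * (w y * f z) =
      2 * (ENNReal.ofReal (sqNorm y) * w y) * f z + 2 * w y * (ENNReal.ofReal (sqNorm z) * f z) := by
      intro y z
      rw [add_comm y z, par']; ring
    simp_rw [this, ENNReal.tsum_add, ENNReal.tsum_mul_left, ENNReal.tsum_mul_right, ENNReal.tsum_mul_left]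
    unfold m0; ring
  exact (ENNReal.mul_right_inj (by norm_num) (by norm_num)).mp h3

def tr (g k : (Fin d → ℤ) → ℝ≥0∞) (x : Fin d → ℤ) : ℝ≥0∞ :=
  ∑' p : (Fin d → ℤ) × (Fin d → ℤ), g p.1 * k p.2 * g (x - p.1 - p.2)

lemma tr_eq (g k : (Fin d → ℤ) → ℝ≥0∞) (x) : tr g k x = cv g (cv k g) x := by
  unfold tr cv
  rw [ENNReal.tsum_prod (f := fun a b => g a * k b * g (x - a - b))]
  simp_rw [← ENNReal.tsum_mul_left, mul_assoc]

lemma cv_dl' (w : (Fin d → ℤ) → ℝ≥0∞) (x) : cv dl w x = w x := by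
  unfold cv
  rw [tsum_eq_single 0]
  · simp [dl]
  · intro y hy; simp [dl, hy]

end Aux

namespace Aux
variable {d : ℕ} {c₀ : ℝ}

lemma dini {V : Type*} (g g' L : ℝ → V → ℝ) (ℓ : ℝ → ℝ) (b : ℝ)
    (hmono : ∀ x s t, 0 ≤ s → s ≤ t → t ≤ b → g s x ≤ g t x) (h0 : ∀ t x, 0 ≤ g t x)
    (hs : ∀ t ∈ Set.Icc 0 b, Summable (g t))
    (hder : ∀ x, ∀ t ∈ Set.Icc 0 b, HasDerivWithinAt (fun s => g s x) (g' t x) (Set.Ici 0) t)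
    (hL : ∀ t ∈ Set.Icc 0 b, ∀ x, L t x ≤ g' t x)
    (hsum : ∀ t ∈ Set.Icc 0 b, HasSum (L t) (ℓ t)) :
    ContinuousOn (fun t => -∑' x, g t x) (Set.Icc 0 b) ∧
    ∀ t ∈ Set.Ico 0 b, ∀ r, -ℓ t < r →
      ∃ᶠ z in nhdsWithin t (Set.Ioi t), slope (fun t => -∑' x, g t x) t z < r := by
  constructor
  · rcases lt_or_ge b 0 with hb | hb
    · rw [Set.Icc_eq_empty (not_le.mpr hb)]; exact continuousOn_empty _
    apply ContinuousOn.neg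
    apply continuousOn_tsum (u := g b)
    · intro x t ht
      exact (hder x t ht).continuousWithinAt.mono Set.Icc_subset_Ici_self
    · exact hs b ⟨hb, le_rfl⟩
    · intro x t ht
      rw [Real.norm_of_nonneg (h0 _ _)]
      exact hmono x t b ht.1 ht.2 le_rfl
  · intro t ht r hr
    have ht' : t ∈ Set.Icc 0 b := ⟨ht.1, ht.2.le⟩
    have h1 : ∀ᶠ S in (Filter.atTop : Filter (Finset V)), -r < ∑ x ∈ S, L t x :=
      (hsum t ht').eventually (lt_mem_nhds (by linarith))
    obtain ⟨S, hS⟩ := h1.exists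
    have hS' : -∑ x ∈ S, g' t x < r := by
      have := Finset.sum_le_sum (s := S) fun x _ => hL t ht' x
      linarith
    have hd : HasDerivWithinAt (fun s => -∑ x ∈ S, g s x) (-∑ x ∈ S, g' t x) (Set.Ioi t) t := by
      apply HasDerivWithinAt.neg
      apply HasDerivWithinAt.fun_sum
      intro x _
      exact (hder x t ht').mono (fun y hy => ht.1.trans (Set.mem_Ioi.mp hy).le)
    rw [hasDerivWithinAt_iff_tendsto_slope' (by simp)] at hd
    have e1 := hd.eventually (gt_mem_nhds hS')
    have e2 : ∀ᶠ z in nhdsWithin t (Set.Ioi t), z ∈ Set.Ioc t b := Ioc_mem_nhdsGT ht.2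
    apply Filter.Eventually.frequently
    filter_upwards [e1, e2] with z hz1 hz2
    refine lt_of_le_of_lt ?_ hz1
    have hz : z ∈ Set.Icc 0 b := ⟨ht.1.trans hz2.1.le, hz2.2⟩
    rw [slope_def_field, slope_def_field]
    apply div_le_div_of_nonneg_right _ (sub_nonneg.mpr hz2.1.le)
    have k1 : ∑ x ∈ S, (g z x - g t x) ≤ ∑' x, (g z x - g t x) :=
      ((hs z hz).sub (hs t ht')).sum_le_tsum S (fun x _ => sub_nonneg.mpr (hmono x t z ht.1 hz2.1.le hz2.2))
    rw [(hs z hz).tsum_sub (hs t ht'), Finset.sum_sub_distrib] at k1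
    linarith

section mod
variable (M : Model d c₀)

def ok (M : Model d c₀) (t : ℝ) : Prop := 0 ≤ t ∧ ENNReal.ofReal t < M.βc

lemma G_mom (hd : 0 < d) {t : ℝ} (h : ok M t) : m0 (M.G t) ≠ ⊤ ∧ m2 (M.G t) ≠ ⊤ :=
  fin_mom hd (M.expDecay h.1 h.2)

def Hn (t : ℝ) (x : Fin d → ℤ) : ℝ≥0∞ := ENNReal.ofReal (M.H t x)

lemma H_mom (hd : 0 < d) {t : ℝ} (h : ok M t) : m0 (Hn M t) ≠ ⊤ ∧ m2 (Hn M t) ≠ ⊤ := by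
  apply fin_mom hd
  obtain ⟨C, hC, c, hc, h⟩ := M.H_expDecay h.1 h.2
  exact ⟨C, hC, c, hc, fun x => ENNReal.ofReal_le_ofReal (h x)⟩

lemma wK_m0 (K : AdmissibleKernel d c₀) : m0 (wK K) = 1 := wK_sum K

lemma wK_m2 (K : AdmissibleKernel d c₀) : m2 (wK K) = ENNReal.ofReal (K.sigma ^ 2) := by
  rw [← wK_sq]; unfold m2; simp_rw [mul_comm]

lemma G_even (t : ℝ) (x) : M.G t (-x) = M.G t x := symm_neg (M.symm t) x

lemma one_le_chi {t : ℝ} (h0 : 0 ≤ t) (h : ENNReal.ofReal t ≤ M.βc) : 1 ≤ m0 (M.G t) := by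
  calc (1:ℝ≥0∞) = M.G 0 0 := by rw [M.init]; simp
    _ ≤ M.G t 0 := M.mono 0 le_rfl h0 h
    _ ≤ _ := ENNReal.le_tsum 0

lemma xiSq_eq (t : ℝ) : M.xiSq t =
    (ENNReal.ofReal (M.K.sigma ^ 2) * m0 (M.G t) + m2 (M.G t)) / m0 (M.G t) := by
  have := cv_m2 (wK M.K) (M.G t) (symm_neg (wK_symm M.K))
  rw [wK_m0, wK_m2, one_mul] at this
  rw [← this]; rfl

lemma tr_m0 (g k : (Fin d → ℤ) → ℝ≥0∞) : m0 (tr g k) = m0 g * (m0 k * m0 g) := by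
  have : tr g k = cv g (cv k g) := funext (tr_eq g k)
  rw [this, cv_m0, cv_m0]

lemma tr_m2 (g k : (Fin d → ℤ) → ℝ≥0∞) (hg : ∀ x, g (-x) = g x) (hk : ∀ x, k (-x) = k x) :
    m2 (tr g k) = m2 g * (m0 k * m0 g) + m0 g * (m2 k * m0 g + m0 k * m2 g) := by
  have : tr g k = cv g (cv k g) := funext (tr_eq g k)
  rw [this, cv_m2 _ _ hg, cv_m0, cv_m2 _ _ hk]

lemma le_m0 (f : (Fin d → ℤ) → ℝ≥0∞) (x) : f x ≤ m0 f := ENNReal.le_tsum x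

def Lf (t : ℝ) (x : Fin d → ℤ) : ℝ := (tr (M.G t) (wK M.K) x).toReal - (tr (M.G t) (Hn M t) x).toReal

lemma I2' (hd : 0 < d) {t : ℝ} (h : ok M t) (x) : Lf M t x ≤ M.G' t x := by
  refine le_trans (le_of_eq ?_) (M.I2 h.1 h.2 x)
  have hG := (G_mom M hd h).1
  have hG1 : ∀ y, M.G t y ≠ ⊤ := fun y => ne_top_of_le_ne_top hG (le_m0 _ y)
  have f1 : tr (M.G t) (wK M.K) x ≠ ⊤ := by
    refine ne_top_of_le_ne_top ?_ (le_m0 _ x)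
    rw [tr_m0, wK_m0]; exact ENNReal.mul_ne_top hG (ENNReal.mul_ne_top (by simp) hG)
  have f2 : tr (M.G t) (Hn M t) x ≠ ⊤ := by
    refine ne_top_of_le_ne_top ?_ (le_m0 _ x)
    rw [tr_m0]; exact ENNReal.mul_ne_top hG (ENNReal.mul_ne_top (H_mom M hd h).1 hG)
  have s1 := ENNReal.summable_toReal f1
  have s2 := ENNReal.summable_toReal f2
  unfold Lf
  have n1 : ∀ p : (Fin d → ℤ) × (Fin d → ℤ), M.G t p.1 * wK M.K p.2 * M.G t (x - p.1 - p.2) ≠ ⊤ := fun p =>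
    ENNReal.mul_ne_top (ENNReal.mul_ne_top (hG1 _) ENNReal.ofReal_ne_top) (hG1 _)
  have n2 : ∀ p : (Fin d → ℤ) × (Fin d → ℤ), M.G t p.1 * Hn M t p.2 * M.G t (x - p.1 - p.2) ≠ ⊤ := fun p =>
    ENNReal.mul_ne_top (ENNReal.mul_ne_top (hG1 _) ENNReal.ofReal_ne_top) (hG1 _)
  unfold tr
  rw [ENNReal.tsum_toReal_eq n1, ENNReal.tsum_toReal_eq n2, ← s1.tsum_sub s2]
  congr 1; ext p
  simp only [ENNReal.toReal_mul, wK, Hn, ENNReal.toReal_ofReal (M.K.nonneg _),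
    ENNReal.toReal_ofReal (M.H_nonneg _ _)]
  ring

lemma hasSum_toReal' {α : Type*} {f : α → ℝ≥0∞} (h : ∑' x, f x ≠ ⊤) :
    HasSum (fun x => (f x).toReal) (∑' x, f x).toReal := by
  rw [ENNReal.tsum_toReal_eq (fun a => ne_top_of_le_ne_top h (ENNReal.le_tsum a))]
  exact (ENNReal.summable_toReal h).hasSum

lemma m0_hasSum {f : (Fin d → ℤ) → ℝ≥0∞} (h : m0 f ≠ ⊤) :
    HasSum (fun x => (f x).toReal) (m0 f).toReal := hasSum_toReal' h

lemma m2_hasSum {f : (Fin d → ℤ) → ℝ≥0∞} (h : m2 f ≠ ⊤) :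
    HasSum (fun x => sqNorm x * (f x).toReal) (m2 f).toReal := by
  have := hasSum_toReal' h
  simp only [ENNReal.toReal_mul, ENNReal.toReal_ofReal (sqNorm_nonneg _)] at this
  exact this

def X (t : ℝ) : ℝ := (m0 (M.G t)).toReal
def Y (t : ℝ) : ℝ := (m2 (M.G t)).toReal
def hh (t : ℝ) : ℝ := ∑' x, M.H t x
def h2 (t : ℝ) : ℝ := ∑' x, sqNorm x * M.H t x

lemma hh_eq (hd : 0 < d) {t : ℝ} (h : ok M t) : (m0 (Hn M t)).toReal = hh M t := by
  rw [← (m0_hasSum (H_mom M hd h).1).tsum_eq]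
  unfold hh Hn; congr 1; ext x; rw [ENNReal.toReal_ofReal (M.H_nonneg _ _)]

lemma h2_eq (hd : 0 < d) {t : ℝ} (h : ok M t) : (m2 (Hn M t)).toReal = h2 M t := by
  rw [← (m2_hasSum (H_mom M hd h).2).tsum_eq]
  unfold h2 Hn; congr 1; ext x; rw [ENNReal.toReal_ofReal (M.H_nonneg _ _)]

lemma L_sum0 (hd : 0 < d) {t : ℝ} (h : ok M t) :
    HasSum (Lf M t) (X M t ^ 2 * (1 - hh M t)) := by
  have hG := (G_mom M hd h).1
  have hH := (H_mom M hd h).1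
  have f1 : m0 (tr (M.G t) (wK M.K)) ≠ ⊤ := by
    rw [tr_m0, wK_m0]; exact ENNReal.mul_ne_top hG (ENNReal.mul_ne_top (by simp) hG)
  have f2 : m0 (tr (M.G t) (Hn M t)) ≠ ⊤ := by
    rw [tr_m0]; exact ENNReal.mul_ne_top hG (ENNReal.mul_ne_top hH hG)
  have key := (m0_hasSum f1).sub (m0_hasSum f2)
  have e : X M t ^ 2 * (1 - hh M t) =
      (m0 (tr (M.G t) (wK M.K))).toReal - (m0 (tr (M.G t) (Hn M t))).toReal := by
    rw [tr_m0, tr_m0, wK_m0]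
    simp only [ENNReal.toReal_mul, hh_eq M hd h]
    unfold X; simp; ring
  rw [e]; exact key

lemma L_sum2 (hd : 0 < d) {t : ℝ} (h : ok M t) :
    HasSum (fun x => sqNorm x * Lf M t x)
      (2 * Y M t * X M t * (1 - hh M t) + X M t ^ 2 * (M.K.sigma ^ 2 - h2 M t)) := by
  obtain ⟨hG, hG2⟩ := (G_mom M hd h)
  obtain ⟨hH, hH2⟩ := (H_mom M hd h)
  have Hev : ∀ x, Hn M t (-x) = Hn M t x := fun x => by unfold Hn; rw [M.H_symm]
  have e1 := tr_m2 (M.G t) (wK M.K) (G_even M t) (symm_neg (wK_symm M.K))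
  have e2 := tr_m2 (M.G t) (Hn M t) (G_even M t) Hev
  rw [wK_m0, wK_m2] at e1
  have f1 : m2 (tr (M.G t) (wK M.K)) ≠ ⊤ := by
    rw [e1]
    finiteness
  have f2 : m2 (tr (M.G t) (Hn M t)) ≠ ⊤ := by
    rw [e2]; finiteness
  have key := (m2_hasSum f1).sub (m2_hasSum f2)
  have e : (2 * Y M t * X M t * (1 - hh M t) + X M t ^ 2 * (M.K.sigma ^ 2 - h2 M t)) =
      (m2 (tr (M.G t) (wK M.K))).toReal - (m2 (tr (M.G t) (Hn M t))).toReal := by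
    rw [e1, e2, ENNReal.toReal_add (by finiteness) (by finiteness),
      ENNReal.toReal_add (by finiteness) (by finiteness)]
    simp only [ENNReal.toReal_mul]
    rw [ENNReal.toReal_add (by finiteness) (by finiteness),
      ENNReal.toReal_add (by finiteness) (by finiteness)]
    simp only [ENNReal.toReal_mul, hh_eq M hd h, h2_eq M hd h]
    rw [ENNReal.toReal_ofReal (sq_nonneg _)]
    unfold X Y; simp; ring
  have e' : (fun x => sqNorm x * Lf M t x) = fun x => sqNorm x * (tr (M.G t) (wK M.K) x).toReal
      - sqNorm x * (tr (M.G t) (Hn M t) x).toReal := by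
    ext x; unfold Lf; ring
  rw [e, e']; exact key

end mod
end Aux

namespace Aux
variable {d : ℕ} {c₀ : ℝ}

section mod
variable (M : Model d c₀)

lemma ok_mono {s t : ℝ} (h : ok M t) (hs : 0 ≤ s) (hst : s ≤ t) : ok M s :=
  ⟨hs, (ENNReal.ofReal_le_ofReal hst).trans_lt h.2⟩

lemma G_ne_top (hd : 0 < d) {t : ℝ} (h : ok M t) (x) : M.G t x ≠ ⊤ :=
  ne_top_of_le_ne_top (G_mom M hd h).1 (le_m0 _ x)

lemma G_rec {t : ℝ} (h : ok M t) (x) :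
    M.G t x ≤ dl x + ENNReal.ofReal t * cv (wK M.K) (M.G t) x := by
  have h1 := M.I1 le_rfl h.1 h.2 x
  have e : M.G 0 = dl := by ext y; rw [M.init]; rfl
  rw [e, sub_zero] at h1
  have e2 : (∑' p : (Fin d → ℤ) × (Fin d → ℤ),
        dl p.1 * ENNReal.ofReal (M.K.J p.2) * M.G t (x - p.1 - p.2)) = cv (wK M.K) (M.G t) x := by
    rw [ENNReal.tsum_prod (f := fun a b => dl a * ENNReal.ofReal (M.K.J b) * M.G t (x - a - b))]
    rw [← cv_dl' (cv (wK M.K) (M.G t)) x]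
    unfold cv wK
    simp_rw [← ENNReal.tsum_mul_left, mul_assoc]
  rw [e2] at h1; exact h1

lemma X_ge_one (hd : 0 < d) {t : ℝ} (h : ok M t) : 1 ≤ X M t := by
  have := one_le_chi M h.1 h.2.le
  unfold X
  have h2 := ENNReal.toReal_mono (G_mom M hd h).1 this
  simpa using h2

lemma Y_nonneg (t : ℝ) : 0 ≤ Y M t := ENNReal.toReal_nonneg

lemma xi_real (hd : 0 < d) {t : ℝ} (h : ok M t) :
    M.xiSq t = ENNReal.ofReal ((M.K.sigma ^ 2 * X M t + Y M t) / X M t) := by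
  have hX := X_ge_one M hd h
  have hY := Y_nonneg M t
  obtain ⟨f0, f2⟩ := G_mom M hd h
  rw [xiSq_eq, ENNReal.ofReal_div_of_pos (by linarith), ENNReal.ofReal_add (by positivity) hY,
    ENNReal.ofReal_mul (sq_nonneg _)]
  unfold X Y
  rw [ENNReal.ofReal_toReal f0, ENNReal.ofReal_toReal f2]

lemma Y_rec (hd : 0 < d) {t : ℝ} (h : ok M t) :
    Y M t ≤ t * (M.K.sigma ^ 2 * X M t + Y M t) := by
  obtain ⟨f0, f2⟩ := G_mom M hd h
  have h1 : m2 (M.G t) ≤ ENNReal.ofReal t * (ENNReal.ofReal (M.K.sigma ^ 2) * m0 (M.G t) + m2 (M.G t)) := by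
    have e := cv_m2 (wK M.K) (M.G t) (symm_neg (wK_symm M.K))
    rw [wK_m0, wK_m2, one_mul] at e
    rw [← e]
    calc m2 (M.G t) ≤ ∑' x, (ENNReal.ofReal t * (ENNReal.ofReal (sqNorm x) * cv (wK M.K) (M.G t) x)) := by
          refine ENNReal.tsum_le_tsum fun x => ?_
          calc _ ≤ ENNReal.ofReal (sqNorm x) * (dl x + ENNReal.ofReal t * cv (wK M.K) (M.G t) x) := by
                gcongr; exact G_rec M h x
            _ = ENNReal.ofReal (sqNorm x) * dl x + ENNReal.ofReal t * (ENNReal.ofReal (sqNorm x) * cv (wK M.K) (M.G t) x) := by ring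
            _ = _ := by
                have : ENNReal.ofReal (sqNorm x) * dl x = 0 := by
                  unfold dl; split_ifs with hx
                  · subst hx; simp [sqNorm]
                  · simp
                rw [this, zero_add]
      _ = _ := by rw [ENNReal.tsum_mul_left]; rfl
  have h2 := ENNReal.toReal_mono (by finiteness) h1
  rw [ENNReal.toReal_mul, ENNReal.toReal_ofReal h.1, ENNReal.toReal_add (by finiteness) f2,
    ENNReal.toReal_mul, ENNReal.toReal_ofReal (sq_nonneg _)] at h2
  exact h2

def err (δ b : ℝ) : Prop := ∀ t ∈ Set.Icc 0 b, ok M t ∧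
  ENNReal.ofReal (hh M t) + ENNReal.ofReal (h2 M t) / M.xiSq t < ENNReal.ofReal δ

lemma err_real (hd : 0 < d) (hσ : 0 < M.K.sigma) {δ t : ℝ} (hδ : 0 < δ) (h : ok M t)
    (ht1 : t < 1)
    (he : ENNReal.ofReal (hh M t) + ENNReal.ofReal (h2 M t) / M.xiSq t < ENNReal.ofReal δ) :
    hh M t < δ ∧ h2 M t * (1 - t) < δ * M.K.sigma ^ 2 := by
  have hX := X_ge_one M hd h
  have hY := Y_nonneg M t
  have hr := Y_rec M hd h
  constructor
  · have := lt_of_le_of_lt le_self_add he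
    exact (ENNReal.ofReal_lt_ofReal_iff hδ).mp this
  · have k := lt_of_le_of_lt le_add_self he
    have pos : 0 < (M.K.sigma ^ 2 * X M t + Y M t) / X M t := by positivity
    rw [xi_real M hd h, ← ENNReal.ofReal_div_of_pos pos, ENNReal.ofReal_lt_ofReal_iff hδ,
      div_lt_iff₀ pos, ← mul_div_assoc, lt_div_iff₀ (by linarith)] at k
    have k2 := mul_lt_mul_of_pos_right k (show 0 < 1 - t by linarith)
    have k3 : δ * (M.K.sigma ^ 2 * X M t + Y M t) * (1 - t) ≤ δ * (M.K.sigma ^ 2 * X M t) := by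
      rw [mul_assoc]; apply mul_le_mul_of_nonneg_left _ hδ.le; nlinarith
    have k4 : (h2 M t * (1 - t)) * X M t < (δ * M.K.sigma ^ 2) * X M t := by linarith
    exact lt_of_mul_lt_mul_right k4 (by linarith)

lemma X_lower (hd : 0 < d) (hσ : 0 < M.K.sigma) {δ b : ℝ} (hδ : 0 < δ) (hδ1 : δ ≤ 1/2) (hb : b < 1)
    (h : err M δ b) : ∀ t ∈ Set.Icc 0 b, 1 / (1 - (1 - δ) * t) ≤ X M t := by
  have hf : ∀ t ∈ Set.Icc 0 b, -∑' x, (M.G t x).toReal = - X M t := fun t ht => by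
    rw [(m0_hasSum (G_mom M hd (h t ht).1).1).tsum_eq]; rfl
  have hm : ∀ t ∈ Set.Icc 0 b, 0 < 1 - (1 - δ) * t := fun t ht => by nlinarith [ht.1, ht.2]
  obtain ⟨c1, c2⟩ := dini (fun t x => (M.G t x).toReal) M.G' (Lf M)
    (fun t => X M t ^ 2 * (1 - hh M t)) b
    (fun x s t hs hst htb => ENNReal.toReal_mono (G_ne_top M hd (h t ⟨hs.trans hst, htb⟩).1 x)
      (M.mono x hs hst (h t ⟨hs.trans hst, htb⟩).1.2.le))
    (fun _ _ => ENNReal.toReal_nonneg)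
    (fun t ht => (m0_hasSum (G_mom M hd (h t ht).1).1).summable)
    (fun x t ht => M.deriv x (h t ht).1.1 (h t ht).1.2)
    (fun t ht x => I2' M hd (h t ht).1 x)
    (fun t ht => L_sum0 M hd (h t ht).1)
  have hB : ∀ t ∈ Set.Icc 0 b, HasDerivAt (fun t => -(1 / (1 - (1 - δ) * t)))
      (-((1 - δ) / (1 - (1 - δ) * t) ^ 2)) t := by
    intro t ht
    have h1 : HasDerivAt (fun t : ℝ => 1 - (1 - δ) * t) (-(1 - δ)) t := by
      simpa using ((hasDerivAt_id t).const_mul (1 - δ)).const_sub 1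
    have h2 := (h1.fun_inv (hm t ht).ne').fun_neg
    simp only [one_div]
    refine h2.congr_deriv ?_
    ring
  have := image_le_of_liminf_slope_right_lt_deriv_boundary' c1 c2
    (B := fun t => -(1 / (1 - (1 - δ) * t)))
    (B' := fun t => -((1 - δ) / (1 - (1 - δ) * t) ^ 2)) ?_
    (fun t ht => (hB t ht).continuousAt.continuousWithinAt)
    (fun t ht => (hB t ⟨ht.1, ht.2.le⟩).hasDerivWithinAt) ?_
  · intro t ht
    have k := this ht
    simp only [hf t ht] at k
    linarith
  · rcases lt_or_ge b 0 with hb0 | hb0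
    · have : ok M 0 := ⟨le_rfl, by simpa using M.βc_pos⟩
      have k : (fun t => -∑' x, (M.G t x).toReal) 0 = - X M 0 := by
        simp only [(m0_hasSum (G_mom M hd this).1).tsum_eq]; rfl
      refine k.le.trans ?_; have := X_ge_one M hd this; simp; linarith
    · have h0 : (0:ℝ) ∈ Set.Icc 0 b := ⟨le_rfl, hb0⟩
      simp only [hf 0 h0]; have := X_ge_one M hd (h 0 h0).1; simp; linarith
  · intro t ht hXt
    have ht' : t ∈ Set.Icc 0 b := ⟨ht.1, ht.2.le⟩
    simp only [hf t ht'] at hXt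
    have hXt' : X M t = 1 / (1 - (1 - δ) * t) := by linarith
    obtain ⟨e1, -⟩ := err_real M hd hσ hδ (h t ht').1 (by linarith [ht.2]) (h t ht').2
    have hX := X_ge_one M hd (h t ht').1
    have : (1 - δ) / (1 - (1 - δ) * t) ^ 2 = X M t ^ 2 * (1 - δ) := by
      rw [hXt', one_div, inv_pow]; ring
    rw [this]
    apply neg_lt_neg
    apply mul_lt_mul_of_pos_left _ (by positivity)
    linarith

lemma Y_lower (hd : 0 < d) (hσ : 0 < M.K.sigma) {δ b : ℝ} (hδ : 0 < δ) (hδ1 : δ ≤ 1/2) (hb : b ≤ 1 - 2 * δ)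
    (hb0 : 0 ≤ b)
    (h : err M δ b) : M.K.sigma ^ 2 * b / 2 * (1 / (1 - (1 - δ) * b)) ^ 2 ≤ Y M b := by
  have hXl := X_lower M hd hσ hδ hδ1 (by linarith) h
  have hf : ∀ t ∈ Set.Icc 0 b, -∑' x, sqNorm x * (M.G t x).toReal = - Y M t := fun t ht => by
    rw [(m2_hasSum (G_mom M hd (h t ht).1).2).tsum_eq]; rfl
  have hm : ∀ t ∈ Set.Icc 0 b, 0 < 1 - (1 - δ) * t := fun t ht => by nlinarith [ht.1, ht.2]
  obtain ⟨c1, c2⟩ := dini (fun t x => sqNorm x * (M.G t x).toReal) (fun t x => sqNorm x * M.G' t x)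
    (fun t x => sqNorm x * Lf M t x)
    (fun t => 2 * Y M t * X M t * (1 - hh M t) + X M t ^ 2 * (M.K.sigma ^ 2 - h2 M t)) b
    (fun x s t hs hst htb => mul_le_mul_of_nonneg_left
      (ENNReal.toReal_mono (G_ne_top M hd (h t ⟨hs.trans hst, htb⟩).1 x)
      (M.mono x hs hst (h t ⟨hs.trans hst, htb⟩).1.2.le)) (sqNorm_nonneg x))
    (fun _ x => mul_nonneg (sqNorm_nonneg x) ENNReal.toReal_nonneg)
    (fun t ht => (m2_hasSum (G_mom M hd (h t ht).1).2).summable)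
    (fun x t ht => (M.deriv x (h t ht).1.1 (h t ht).1.2).const_mul (sqNorm x))
    (fun t ht x => mul_le_mul_of_nonneg_left (I2' M hd (h t ht).1 x) (sqNorm_nonneg x))
    (fun t ht => L_sum2 M hd (h t ht).1)
  have hB : ∀ t ∈ Set.Icc 0 b, HasDerivAt (fun t => -(M.K.sigma ^ 2 * t / 2 * (1 / (1 - (1 - δ) * t)) ^ 2))
      (-(M.K.sigma ^ 2 / 2 * (1 / (1 - (1 - δ) * t)) ^ 2 +
        M.K.sigma ^ 2 * t * (1 - δ) * (1 / (1 - (1 - δ) * t)) ^ 3)) t := by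
    intro t ht
    have h1 : HasDerivAt (fun t : ℝ => 1 - (1 - δ) * t) (-(1 - δ)) t := by
      simpa using ((hasDerivAt_id t).const_mul (1 - δ)).const_sub 1
    have h2 := ((h1.fun_inv (hm t ht).ne').fun_pow 2)
    have h3 : HasDerivAt (fun t : ℝ => M.K.sigma ^ 2 * t / 2) (M.K.sigma ^ 2 / 2) t := by
      simpa using ((hasDerivAt_id t).const_mul (M.K.sigma ^ 2)).div_const 2
    have h4 := (h3.fun_mul h2).fun_neg
    simp only [one_div]
    refine h4.congr_deriv ?_
    rw [show 2 - 1 = 1 from rfl, pow_one, div_eq_mul_inv _ ((1 - (1 - δ) * t) ^ 2), ← inv_pow]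
    generalize (1 - (1 - δ) * t)⁻¹ = v
    push_cast
    ring
  have := image_le_of_liminf_slope_right_lt_deriv_boundary' c1 c2
    (B := fun t => -(M.K.sigma ^ 2 * t / 2 * (1 / (1 - (1 - δ) * t)) ^ 2))
    (B' := fun t => (-(M.K.sigma ^ 2 / 2 * (1 / (1 - (1 - δ) * t)) ^ 2 +
        M.K.sigma ^ 2 * t * (1 - δ) * (1 / (1 - (1 - δ) * t)) ^ 3))) ?_
    (fun t ht => (hB t ht).continuousAt.continuousWithinAt)
    (fun t ht => (hB t ⟨ht.1, ht.2.le⟩).hasDerivWithinAt) ?_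
  · have hbb : b ∈ Set.Icc 0 b := ⟨hb0, le_rfl⟩
    have k := this hbb
    simp only [hf b hbb] at k
    linarith
  · have h0 : (0:ℝ) ∈ Set.Icc 0 b := ⟨le_rfl, hb0⟩
    simp only [hf 0 h0]; have := Y_nonneg M 0; simp; linarith
  · intro t ht hXt
    have ht' : t ∈ Set.Icc 0 b := ⟨ht.1, ht.2.le⟩
    simp only [hf t ht'] at hXt
    have hYt : Y M t = M.K.sigma ^ 2 * t / 2 * (1 / (1 - (1 - δ) * t)) ^ 2 := by linarith
    obtain ⟨e1, e2⟩ := err_real M hd hσ hδ (h t ht').1 (by linarith [ht.2]) (h t ht').2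
    have hXm := hXl t ht'
    have hu : 0 < 1 / (1 - (1 - δ) * t) := one_div_pos.mpr (hm t ht')
    set u := 1 / (1 - (1 - δ) * t) with hu'
    have e3 : h2 M t < M.K.sigma ^ 2 / 2 := by
      have a1 : 2 * δ ≤ 1 - t := by linarith [ht.2]
      by_contra hc
      have hc := not_lt.mp hc
      have a2 : M.K.sigma ^ 2 / 2 * (2 * δ) ≤ h2 M t * (1 - t) := by
        apply mul_le_mul hc a1 (by positivity); exact (by positivity : 0 ≤ M.K.sigma ^ 2 / 2).trans hc
      nlinarith
    have hs2 : 0 < M.K.sigma ^ 2 := by positivity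
    apply neg_lt_neg
    have b1 : M.K.sigma ^ 2 * t * (1 - δ) * u ^ 3 ≤ 2 * Y M t * X M t * (1 - hh M t) := by
      have hY0 := Y_nonneg M t
      have hX0 : 0 ≤ X M t := ENNReal.toReal_nonneg
      calc _ = 2 * Y M t * u * (1 - δ) := by rw [hYt]; ring
        _ ≤ 2 * Y M t * X M t * (1 - hh M t) := by gcongr; linarith
    have b2 : M.K.sigma ^ 2 / 2 * u ^ 2 < X M t ^ 2 * (M.K.sigma ^ 2 - h2 M t) := by
      calc _ ≤ M.K.sigma ^ 2 / 2 * X M t ^ 2 := by gcongr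
        _ < (M.K.sigma ^ 2 - h2 M t) * X M t ^ 2 := by
          apply mul_lt_mul_of_pos_right _ (pow_pos (by linarith) 2)
          linarith
        _ = _ := by ring
    linarith

end mod
end Aux

namespace Aux
variable {d : ℕ} {c₀ : ℝ}

section mod
variable (M : Model d c₀)

lemma G_dom (hd : 0 < d) {β : ℝ} (h0 : 0 ≤ β) (h1 : β < 1) (h : ENNReal.ofReal β ≤ M.βc) (x) :
    M.G β x ≤ ∑' n, ENNReal.ofReal β ^ n * (cv (wK M.K))^[n] dl x := by
  have A : ∀ t, ok M t → t < 1 → M.G t x ≤ ∑' n, ENNReal.ofReal t ^ n * (cv (wK M.K))^[n] dl x := by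
    intro t ht ht1
    exact dom (wK M.K) (wK_sum M.K) (M.G t) (m0 (M.G t)) _ (G_mom M hd ht).1
      (by simpa using ht1) (le_m0 _) (G_rec M ht) x
  rcases h.lt_or_eq with h | h
  · exact A β ⟨h0, h⟩ h1
  · have hne : M.βc ≠ ⊤ := by rw [← h]; exact ENNReal.ofReal_ne_top
    have e : M.βc.toReal = β := by rw [← h, ENNReal.toReal_ofReal h0]
    have := M.limit hne x
    rw [e] at this
    rw [this]
    refine iSup₂_le fun t ht => ?_
    have hok : ok M t := ⟨ht.1, by rw [← h]; exact (ENNReal.ofReal_lt_ofReal_iff (ht.1.trans_lt ht.2)).mpr ht.2⟩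
    refine (A t hok (ht.2.trans h1)).trans (ENNReal.tsum_le_tsum fun n => ?_)
    gcongr
    exact ht.2.le

lemma chi_le (hd : 0 < d) {β : ℝ} (h0 : 0 ≤ β) (h1 : β < 1) (h : ENNReal.ofReal β ≤ M.βc) :
    m0 (M.G β) ≤ (ENNReal.ofReal (1 - β))⁻¹ := by
  calc m0 (M.G β) ≤ ∑' x, ∑' n, ENNReal.ofReal β ^ n * (cv (wK M.K))^[n] dl x :=
        ENNReal.tsum_le_tsum fun x => G_dom M hd h0 h1 h x
    _ = ∑' n, ENNReal.ofReal β ^ n := by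
        rw [ENNReal.tsum_comm]; simp_rw [ENNReal.tsum_mul_left, cv_mass _ (wK_sum M.K), mul_one]
    _ = _ := by rw [ENNReal.tsum_geometric, ENNReal.ofReal_sub _ h0, ENNReal.ofReal_one]

lemma G_le (hd : 0 < d) {β : ℝ} (h0 : 0 ≤ β) (h1 : β < 1) (h : ENNReal.ofReal β ≤ M.βc) (x) :
    M.G β x ≤ dl x + ∑' n, ENNReal.ofReal β ^ n * (cv (wK M.K))^[n+1] dl x := by
  refine (G_dom M hd h0 h1 h x).trans ?_
  rw [tsum_eq_zero_add' ENNReal.summable]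
  simp only [pow_zero, Function.iterate_zero, id, one_mul]
  refine add_le_add le_rfl (ENNReal.tsum_le_tsum fun n => mul_le_mul_left ?_ _)
  rw [pow_succ]
  exact mul_le_of_le_one_right' (by simpa using h1.le)

lemma F_le (hd : 0 < d) {β : ℝ} (h0 : 0 ≤ β) (h1 : β < 1) (h : ENNReal.ofReal β ≤ M.βc) (x) :
    M.F β x ≤ ∑' n, ENNReal.ofReal β ^ n * (cv (wK M.K))^[n+1] dl x := by
  calc M.F β x ≤ ∑' y, wK M.K y * ∑' n, ENNReal.ofReal β ^ n * (cv (wK M.K))^[n] dl (x - y) :=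
        ENNReal.tsum_le_tsum fun y => mul_le_mul_right (G_dom M hd h0 h1 h _) _
    _ = _ := by
        simp_rw [← ENNReal.tsum_mul_left]
        rw [ENNReal.tsum_comm]
        congr 1; ext n
        rw [Function.iterate_succ_apply']
        unfold cv
        rw [← ENNReal.tsum_mul_left]
        congr 1; ext y; ring

lemma betaOf_spec {δ β t : ℝ} (h : β ≤ M.betaOf δ) (ht0 : 0 ≤ t) (ht : t < β) :
    ∃ b, t < b ∧ ENNReal.ofReal b < M.βc ∧ M.E b < ENNReal.ofReal δ := by
  unfold Model.betaOf at h
  set S := {β : ℝ | 0 ≤ β ∧ ENNReal.ofReal β < M.βc ∧ M.E β < ENNReal.ofReal δ}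
  have hne : S.Nonempty := by
    by_contra hc
    rw [Set.not_nonempty_iff_eq_empty] at hc
    rw [hc, Real.sSup_empty] at h; linarith
  obtain ⟨b, hb, hb2⟩ := exists_lt_of_lt_csSup hne (lt_of_lt_of_le ht h)
  exact ⟨b, hb2, hb.2⟩

lemma err_of {δ β t : ℝ} (h : β ≤ M.betaOf δ) (ht0 : 0 ≤ t) (ht : t < β) : err M δ t := by
  obtain ⟨b, hb, hb2, hb3⟩ := betaOf_spec M h ht0 ht
  intro s hs
  refine ⟨⟨hs.1, (ENNReal.ofReal_le_ofReal (hs.2.trans hb.le)).trans_lt hb2⟩, lt_of_le_of_lt ?_ hb3⟩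
  unfold Model.E hh h2
  exact le_iSup₂ (f := fun t (_ : t ∈ Set.Icc 0 b) => (ENNReal.ofReal (∑' x, M.H t x) +
      ENNReal.ofReal (∑' x, sqNorm x * M.H t x) / M.xiSq t)) s ⟨hs.1, hs.2.trans hb.le⟩

lemma le_bc {δ β : ℝ} (h : β ≤ M.betaOf δ) : ENNReal.ofReal β ≤ M.βc := by
  by_contra hc
  have hc := not_le.mp hc
  have hne : M.βc ≠ ⊤ := hc.ne_top
  have hlt : M.βc.toReal < β := by
    by_contra h'
    have := ENNReal.ofReal_le_ofReal (not_lt.mp h')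
    rw [ENNReal.ofReal_toReal hne] at this
    exact absurd hc (not_lt.mpr this)
  obtain ⟨b, hb, hb2, -⟩ := betaOf_spec M h ENNReal.toReal_nonneg hlt
  have := ENNReal.ofReal_le_ofReal hb.le
  rw [ENNReal.ofReal_toReal hne] at this
  exact absurd hb2 (not_lt.mpr this)

lemma xi_lower (hd : 0 < d) (hσ : 0 < M.K.sigma) {δ β : ℝ} (hδ : 0 < δ) (hδ1 : δ ≤ 1/2)
    (h0 : 0 ≤ β) (h1 : β ≤ 1 - δ) (h : β ≤ M.betaOf δ) :
    M.xi β = 0 ∨ M.K.sigma ≤ 6 * √(1 - β) * M.xi β := by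
  have hbc := le_bc M h
  have hβ1 : β < 1 := by linarith
  have c1 := one_le_chi M h0 hbc
  have c2 := chi_le M hd h0 hβ1 hbc
  have pos : 0 < 1 - β := by linarith
  have c3 : m0 (M.G β) ≠ ⊤ := ne_top_of_le_ne_top (by simpa using hβ1) c2
  by_cases htop : M.xiSq β = ⊤
  · left; unfold Model.xi; rw [htop]; simp
  right
  have e := xiSq_eq M β
  rcases le_or_gt β (3/4) with hb | hb
  · have k : ENNReal.ofReal (M.K.sigma ^ 2) ≤ M.xiSq β := by
      rw [e, ENNReal.le_div_iff_mul_le (Or.inl (by positivity)) (Or.inl c3)]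
      exact le_self_add
    have k2 : M.K.sigma ≤ M.xi β := by
      unfold Model.xi
      apply Real.le_sqrt_of_sq_le
      exact (ENNReal.ofReal_le_iff_le_toReal htop).mp k
    have k3 : 1/2 ≤ √(1 - β) := Real.le_sqrt_of_sq_le (by linarith)
    nlinarith
  · set t := 2 * β - 1 with ht
    have hE := err_of M h (t := t) (by linarith) (by linarith)
    have hY := Y_lower M hd hσ hδ hδ1 (b := t) (by linarith) (by linarith) hE
    have hok := (hE t ⟨by linarith, le_rfl⟩).1
    have hm : 1 - (1 - δ) * t ≤ 3 * (1 - β) := by nlinarith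
    have hm0 : 0 < 1 - (1 - δ) * t := by nlinarith
    have k1 : M.K.sigma ^ 2 / (36 * (1 - β) ^ 2) ≤ Y M t := by
      refine le_trans ?_ hY
      have a : 1 / (3 * (1 - β)) ≤ 1 / (1 - (1 - δ) * t) := one_div_le_one_div_of_le hm0 hm
      calc M.K.sigma ^ 2 / (36 * (1 - β) ^ 2) = M.K.sigma ^ 2 * (1/2) / 2 * (1 / (3 * (1 - β))) ^ 2 := by
            field_simp; norm_num
        _ ≤ _ := by
          have : 1/2 ≤ t := by linarith
          gcongr
    have k2 : ENNReal.ofReal (Y M t) ≤ m2 (M.G β) := by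
      unfold Y
      rw [ENNReal.ofReal_toReal (G_mom M hd hok).2]
      refine ENNReal.tsum_le_tsum fun x => ?_
      gcongr
      exact M.mono x (by linarith) (by linarith) hbc
    have k3 : ENNReal.ofReal (M.K.sigma ^ 2 / (36 * (1 - β))) ≤ M.xiSq β := by
      rw [e, ENNReal.le_div_iff_mul_le (Or.inl (by positivity)) (Or.inl c3)]
      calc _ ≤ ENNReal.ofReal (M.K.sigma ^ 2 / (36 * (1 - β))) * (ENNReal.ofReal (1 - β))⁻¹ := by gcongr
        _ = ENNReal.ofReal (M.K.sigma ^ 2 / (36 * (1 - β) ^ 2)) := by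
            rw [← ENNReal.ofReal_inv_of_pos pos, ← ENNReal.ofReal_mul (by positivity)]
            congr 1; field_simp
        _ ≤ ENNReal.ofReal (Y M t) := ENNReal.ofReal_le_ofReal k1
        _ ≤ m2 (M.G β) := k2
        _ ≤ _ := le_add_self
    have k4 := (ENNReal.ofReal_le_iff_le_toReal htop).mp k3
    unfold Model.xi
    rw [mul_assoc, ← Real.sqrt_mul pos.le]
    have : M.K.sigma / 6 ≤ √((1 - β) * (M.xiSq β).toReal) := by
      apply Real.le_sqrt_of_sq_le
      rw [div_le_iff₀ (by positivity)] at k4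
      linarith
    linarith

end mod

lemma sigma_le (K : AdmissibleKernel d c₀) : K.sigma ≤ √d * K.R := by
  have hR : 0 < K.R := lt_of_lt_of_le one_pos K.R_ge_one
  unfold AdmissibleKernel.sigma
  rw [Real.sqrt_le_left (by positivity), mul_pow, Real.sq_sqrt (by positivity)]
  calc ∑' x, sqNorm x * K.J x ≤ ∑' x, (d * K.R ^ 2) * K.J x := by
        refine K.summable_sq.tsum_le_tsum (fun x => ?_) (K.summable.mul_left _)
        rcases (K.nonneg x).eq_or_lt with h | h
        · rw [← h]; simp
        · gcongr
          refine (sqNorm_le x).trans ?_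
          have := K.range_le x h
          have := supNorm_nonneg x
          gcongr
    _ = _ := by rw [tsum_mul_left, K.norm_one, mul_one]

lemma final_bound (hd : 2 < d) (hc : 0 < c₀) (hc1 : c₀ ≤ 1) (K : AdmissibleKernel d c₀) (C s β ξ : ℝ) (hC : 0 < C)
    (hs : 0 ≤ s) (hβ : β < 1) (hξ : ξ = 0 ∨ K.sigma ≤ 6 * √(1 - β) * ξ) (hξ0 : 0 ≤ ξ) :
    C / K.R^d * (1/(max 1 (s/K.R))^(d-2)) * Real.exp (-(√(1-β) * (s/K.R)/2)) ≤
    (C * √d ^ d * c₀⁻¹ ^ (d - 2)) / K.sigma ^ d * (K.sigma / max K.sigma s) ^ ((d:ℝ) - 2) *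
      Real.exp (-(c₀ / 12) * s / ξ) := by
  have hR : 0 < K.R := lt_of_lt_of_le one_pos K.R_ge_one
  have hσR : c₀ * K.R ≤ K.sigma := K.sigma_lower
  have hσ : 0 < K.sigma := lt_of_lt_of_le (by positivity) hσR
  have hσ2 := sigma_le K
  have e : ((d:ℝ) - 2) = ((d - 2 : ℕ) : ℝ) := by rw [Nat.cast_sub hd.le]; norm_num
  rw [e, Real.rpow_natCast]
  have hmax : 0 < max K.sigma s := lt_of_lt_of_le hσ (le_max_left _ _)
  have b1 : C / K.R ^ d ≤ C * √d ^ d / K.sigma ^ d := by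
    rw [div_le_div_iff₀ (by positivity) (by positivity), mul_assoc, ← mul_pow]
    gcongr
  have b2 : 1 / (max 1 (s / K.R)) ≤ c₀⁻¹ * (K.sigma / max K.sigma s) := by
    have hq : 0 < max 1 (s / K.R) := lt_of_lt_of_le one_pos (le_max_left _ _)
    have key : c₀ * max K.sigma s ≤ K.sigma * max 1 (s / K.R) := by
      rcases max_choice K.sigma s with h | h
      · rw [h]
        have : 1 ≤ max 1 (s / K.R) := le_max_left _ _
        nlinarith
      · rw [h]
        calc c₀ * s = (c₀ * K.R) * (s / K.R) := by field_simp
          _ ≤ K.sigma * max 1 (s / K.R) := by gcongr; exact le_max_right _ _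
    rw [inv_mul_eq_div, div_div, div_le_div_iff₀ hq (by positivity)]
    linarith
  have b3 : Real.exp (-(√(1-β) * (s/K.R)/2)) ≤ Real.exp (-(c₀ / 12) * s / ξ) := by
    apply Real.exp_le_exp.mpr
    rcases hξ with h | h
    · rw [h, div_zero]
      have : 0 ≤ √(1-β) * (s/K.R)/2 := by positivity
      linarith
    · have hξp : 0 < ξ := by
        rcases hξ0.eq_or_lt with h' | h'
        · rw [← h'] at h; linarith
        · exact h'
      have : (c₀ / 12) * s / ξ ≤ √(1-β) * (s/K.R)/2 := by
        have k : c₀ * K.R ≤ 6 * √(1 - β) * ξ := hσR.trans h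
        rw [div_le_iff₀ hξp]
        have : √(1-β) * (s/K.R)/2 * ξ = (6 * √(1 - β) * ξ) * (s / (12 * K.R)) := by field_simp; ring
        rw [this]
        calc c₀ / 12 * s = (c₀ * K.R) * (s / (12 * K.R)) := by field_simp
          _ ≤ _ := by gcongr
      have e2 : -(c₀ / 12) * s / ξ = -((c₀ / 12) * s / ξ) := by ring
      rw [e2]; linarith
  calc _ ≤ C * √d ^ d / K.sigma ^ d * (c₀⁻¹ * (K.sigma / max K.sigma s)) ^ (d - 2) * Real.exp (-(c₀ / 12) * s / ξ) := by
        rw [← one_div_pow]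
        gcongr
    _ = _ := by rw [mul_pow]; ring

theorem main (d : ℕ) (hd : 2 < d) (c₀ : ℝ) (hc₀ : c₀ ∈ Set.Ioc (0:ℝ) 1) :
    ∃ c > (0:ℝ), ∃ C > (0:ℝ), ∀ M : Model d c₀, ∀ δ : ℝ, δ ∈ Set.Ioc (0:ℝ) (1/2) →
      ∀ β : ℝ, 0 ≤ β → β ≤ min (1 - δ) (M.betaOf δ) → ∀ x : Fin d → ℤ,
        M.G β x ≤ ENNReal.ofReal ((if x = 0 then 1 else 0) +
            C / M.sigma ^ d * (M.sigma / max M.sigma (supNorm x)) ^ ((d:ℝ) - 2) *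
              Real.exp (-c * supNorm x / M.xi β)) ∧
        M.F β x ≤ ENNReal.ofReal (C / M.sigma ^ d *
            (M.sigma / max M.sigma (supNorm x)) ^ ((d:ℝ) - 2) *
              Real.exp (-c * supNorm x / M.xi β)) := by
  have hc := hc₀.1
  have hc1 := hc₀.2
  have hd0 : 0 < d := by omega
  have hdr : (0:ℝ) < d := by exact_mod_cast hd0
  have hC4 := C4_pos hd0 hc
  refine ⟨c₀ / 12, by positivity, C4 d c₀ * √d ^ d * c₀⁻¹ ^ (d - 2), by positivity, ?_⟩
  intro M δ hδ β h0 hβ x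
  have hR : 0 < M.K.R := lt_of_lt_of_le one_pos M.K.R_ge_one
  have hσ : 0 < M.K.sigma := lt_of_lt_of_le (mul_pos hc hR) M.K.sigma_lower
  have hb1 := hβ.trans (min_le_left _ _)
  have hb2 := hβ.trans (min_le_right _ _)
  have hbc := le_bc M hb2
  have hβ1 : β < 1 := by linarith [hδ.1]
  have hξ := xi_lower M hd0 hσ hδ.1 hδ.2 h0 hb1 hb2
  have g := green hd hc hc1 M.K β h0 hβ1 x
  have fb := final_bound hd hc hc1 M.K (C4 d c₀) (supNorm x) β (M.xi β) hC4 (supNorm_nonneg x) hβ1 hξ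
    (Real.sqrt_nonneg _)
  have g2 := g.trans (ENNReal.ofReal_le_ofReal fb)
  constructor
  · refine (G_le M hd0 h0 hβ1 hbc x).trans ?_
    have hσ' : 0 < M.sigma := hσ
    have hs := supNorm_nonneg x
    rw [ENNReal.ofReal_add (by split_ifs <;> norm_num) (by positivity)]
    refine add_le_add (le_of_eq ?_) g2
    unfold dl; split_ifs <;> simp
  · exact (F_le M hd0 h0 hβ1 hbc x).trans g2

end Aux

/-- bounds on `G_β`, `F_β` for `β ≤ min{1-δ, β(δ)}`
(`prop:explicit bound on G for small beta`). -/
theorem statement8 (d : ℕ) (hd : 2 < d) (c₀ : ℝ) (hc₀ : c₀ ∈ Set.Ioc (0:ℝ) 1) :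
    ∃ c > (0:ℝ), ∃ C > (0:ℝ), ∀ M : Model d c₀, ∀ δ : ℝ, δ ∈ Set.Ioc (0:ℝ) (1/2) →
      ∀ β : ℝ, 0 ≤ β → β ≤ min (1 - δ) (M.betaOf δ) → ∀ x : Fin d → ℤ,
        M.G β x ≤ ENNReal.ofReal ((if x = 0 then 1 else 0) +
            C / M.sigma ^ d * (M.sigma / max M.sigma (supNorm x)) ^ ((d:ℝ) - 2) *
              Real.exp (-c * supNorm x / M.xi β)) ∧
        M.F β x ≤ ENNReal.ofReal (C / M.sigma ^ d *
            (M.sigma / max M.sigma (supNorm x)) ^ ((d:ℝ) - 2) *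
              Real.exp (-c * supNorm x / M.xi β)) := by
  exact Aux.main d hd c₀ hc₀
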